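/- Let α, β ∈ ℂ and let (p, q) be a transcendental solution on ℂ of the Hamiltonian system, i.e. p and q are meromorphic on ℂ, not rational, and satisfy p′ = −q² − z·p − α, q′ = p² + z·q + β wherever holomorphic. Then m(r, p) + m(r, q) = O(log r) as r → ∞, and consequently T(r, p) = N(r, p) + O(log r) and T(r, q) = N(r, q) + O(log r). -/

import Mathlib

open Filter Topology Asymptotics

/-- The positive part of the logarithm, `log⁺ x = max 0 (log x)`. -/
noncomputable def logPlus (x : ℝ) : ℝ := max 0 (Real.log x)

/-- The Nevanlinna proximity function
`m(r, f) = (2π)⁻¹ ∫₀^{2π} log⁺ |f(r e^{iθ})| dθ`. -/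
noncomputable def proximity (f : ℂ → ℂ) (r : ℝ) : ℝ :=
  (2 * Real.pi)⁻¹ * ∫ θ in (0:ℝ)..(2 * Real.pi),
    logPlus ‖f ((r : ℂ) * Complex.exp ((θ : ℂ) * Complex.I))‖

/-- The multiplicity of `z₀` as a pole of `f`: the least `k` such that
`(z − z₀)^k · f(z)` has a finite limit at `z₀` (and `0` if there is no such `k`). -/
noncomputable def poleMult (f : ℂ → ℂ) (z₀ : ℂ) : ℕ :=
  sInf {k : ℕ | ∃ c : ℂ, Tendsto (fun z => (z - z₀) ^ k * f z) (𝓝[≠] z₀) (𝓝 c)}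

/-- The unintegrated counting function of poles,
`n(t, f) = Σ_{|z| ≤ t} (multiplicity of z as pole of f)`. -/
noncomputable def nPoles (f : ℂ → ℂ) (t : ℝ) : ℝ :=
  ∑ᶠ z ∈ Metric.closedBall (0 : ℂ) t, (poleMult f z : ℝ)

/-- The integrated counting function of poles,
`N(r, f) = ∫₀^r (n(t,f) − n(0,f))/t dt + n(0,f) log r`. -/
noncomputable def countingN (f : ℂ → ℂ) (r : ℝ) : ℝ :=
  (∫ t in (0:ℝ)..r, (nPoles f t - nPoles f 0) / t) + nPoles f 0 * Real.log r

/-- The Nevanlinna characteristic `T(r, f) = m(r, f) + N(r, f)`. -/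
noncomputable def nevT (f : ℂ → ℂ) (r : ℝ) : ℝ := proximity f r + countingN f r

/-- `(p, q)` is a (meromorphic) solution on `ℂ` of the Hamiltonian system
`p′ = −q² − z·p − α`, `q′ = p² + z·q + β`. -/
def IsHamSolution (α β : ℂ) (p q : ℂ → ℂ) : Prop :=
  MeromorphicOn p Set.univ ∧ MeromorphicOn q Set.univ ∧
    ∀ z : ℂ, AnalyticAt ℂ p z → AnalyticAt ℂ q z →
      deriv p z = -(q z) ^ 2 - z * p z - α ∧ deriv q z = (p z) ^ 2 + z * q z + β

/-- A function is rational if it agrees with a quotient of polynomials away from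
finitely many points. -/
def IsRationalFn (f : ℂ → ℂ) : Prop :=
  ∃ P Q : Polynomial ℂ, Q ≠ 0 ∧ ∀ᶠ z in Filter.cofinite, f z = P.eval z / Q.eval z

/-- `z₀` is a pole of `f`: `|f| → ∞` at `z₀`. -/
def IsPole (f : ℂ → ℂ) (z₀ : ℂ) : Prop :=
  Tendsto (fun z => ‖f z‖) (𝓝[≠] z₀) atTop

/-- `f` has residue `ρ` at a simple pole `z₀`: `(z − z₀)·f(z) → ρ` at `z₀`. -/
def HasResidue (f : ℂ → ℂ) (z₀ ρ : ℂ) : Prop :=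
  Tendsto (fun z => (z - z₀) * f z) (𝓝[≠] z₀) (𝓝 ρ)

/-- `n(r, S)`: the number of points of `S` in the closed disc of radius `r`. -/
noncomputable def setCount (S : Set ℂ) (r : ℝ) : ℝ :=
  ((S ∩ Metric.closedBall (0 : ℂ) r).ncard : ℝ)

/-- The closed sector `{t·e^{iθ} : t > 0, a ≤ θ ≤ b}`. -/
def ClosedSector (a b : ℝ) : Set ℂ :=
  {z | ∃ t θ : ℝ, 0 < t ∧ a ≤ θ ∧ θ ≤ b ∧ z = (t : ℂ) * Complex.exp ((θ : ℂ) * Complex.I)}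

/-!
On the disc of radius `1 / (C * (1 + ‖z‖))` about any point `z`, the solution is bounded by a
simple pole. To see this, walk along a ray from a fixed point while keeping the Hamiltonian
bounded by `B ^ 3`, where `B` grows linearly with the distance. If `p` and `q` are `O(B)`, the
system itself is regular on a disc of radius of order `1 / B`. Otherwise the bound on the
Hamiltonian forces `p ^ 3 + q ^ 3` to be comparatively small, so that, after multiplying `p` and
`q` by suitable cube roots of unity, `p + q` is small compared with `p - q`; then `u = 1 / (p - q)`
is the first coordinate of a chart in which the system is regular, a pole of the solution being a
simple zero of `u`. The Hamiltonian changes by `O(B)` while the pole is passed.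

The integral of `log⁺` of a simple pole over an arc of length `l` is `O(l * log (1 / l))`, and
summing over the arcs of length of order `1 / r` of the circle of radius `r` gives
`m(r, p) + m(r, q) = O(log r)`.
-/

section NormalForm

variable {𝕜 E : Type*} [NontriviallyNormedField 𝕜] [NormedAddCommGroup E] [NormedSpace 𝕜 E]
  {f g : 𝕜 → E} {x : 𝕜}

lemma analyticAt_of_frequently_norm_le {M : ℝ} (hf : MeromorphicNFAt f x)
    (h : ∃ᶠ z in 𝓝[≠] x, ‖f z‖ ≤ M) : AnalyticAt 𝕜 f x := by
  rw [← hf.meromorphicOrderAt_nonneg_iff_analyticAt]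
  by_contra! hneg
  have hlarge := (tendsto_norm_cobounded_atTop.comp
    (tendsto_cobounded_of_meromorphicOrderAt_neg hneg)).eventually (eventually_gt_atTop M)
  exact h (hlarge.mono fun z hz => not_le.2 hz)

lemma analyticAt_and_eq_of_eventuallyEq_nhdsNE (hf : MeromorphicNFAt f x) (hg : AnalyticAt 𝕜 g x)
    (h : f =ᶠ[𝓝[≠] x] g) : AnalyticAt 𝕜 f x ∧ f x = g x := by
  have heq := (hf.eventuallyEq_nhdsNE_iff_eventuallyEq_nhds hg.meromorphicNFAt).1 h
  exact ⟨hg.congr heq.symm, heq.eq_of_nhds⟩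

lemma isClosed_setOf_analyticAt_and_norm_le {φ : 𝕜 → ℝ} (hf : ∀ x, MeromorphicNFAt f x)
    (hφ : Continuous φ) : IsClosed {x | AnalyticAt 𝕜 f x ∧ ‖f x‖ ≤ φ x} := by
  rw [← closure_subset_iff_isClosed]
  intro x hx
  by_contra hxS
  have hfreq : ∃ᶠ z in 𝓝[≠] x, AnalyticAt 𝕜 f z ∧ ‖f z‖ ≤ φ z :=
    frequently_nhdsWithin_iff.2 <| (mem_closure_iff_frequently.1 hx).mono
      fun z hz => ⟨hz, fun hzx => hxS (hzx ▸ hz)⟩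
  have hφx : ∀ᶠ z in 𝓝[≠] x, φ z < φ x + 1 :=
    (hφ.continuousAt.eventually_lt continuousAt_const (lt_add_one _)).filter_mono
      nhdsWithin_le_nhds
  have hfx : AnalyticAt 𝕜 f x := analyticAt_of_frequently_norm_le (hf x)
    ((hfreq.and_eventually hφx).mono fun z hz => hz.1.2.trans hz.2.le)
  have hlim : Tendsto (fun z => ‖f z‖ - φ z) (𝓝[≠] x) (𝓝 (‖f x‖ - φ x)) :=
    (hfx.continuousAt.norm.sub hφ.continuousAt).tendsto.mono_left nhdsWithin_le_nhds
  exact hxS ⟨hfx, sub_nonpos.1 <| le_of_tendsto_of_frequently hlim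
    (hfreq.mono fun z hz => sub_nonpos.2 hz.2)⟩

lemma hasDerivAt_of_eventually_nhdsNE_deriv_eq [CompleteSpace E] (hf : AnalyticAt 𝕜 f x)
    (hg : ContinuousAt g x) (h : ∀ᶠ z in 𝓝[≠] x, deriv f z = g z) : HasDerivAt f (g x) x := by
  have heq := (hf.deriv.continuousAt.eventuallyEq_nhds_iff_eventuallyEq_nhdsNE hg).1 h
  exact heq.eq_of_nhds ▸ hf.differentiableAt.hasDerivAt

lemma eventually_nhdsNE_ne_zero [PreconnectedSpace 𝕜] (hf : ∀ x, MeromorphicAt f x)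
    (hfx : ContinuousAt f x) (hne : f x ≠ 0) (w : 𝕜) : ∀ᶠ z in 𝓝[≠] w, f z ≠ 0 := by
  refine (meromorphicOrderAt_ne_top_iff_eventually_ne_zero (hf w)).1 <|
    MeromorphicOn.meromorphicOrderAt_ne_top_of_isPreconnected (fun z _ => hf z)
      isPreconnected_univ (Set.mem_univ x) (Set.mem_univ w) ?_
  exact (meromorphicOrderAt_ne_top_iff_eventually_ne_zero (hf x)).2
    ((hfx.eventually_ne hne).filter_mono nhdsWithin_le_nhds)

end NormalForm

lemma eventually_nhdsNE_eventually_nhds {X : Type*} [TopologicalSpace X] [T1Space X] {x : X}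
    {p : X → Prop} (h : ∀ᶠ z in 𝓝[≠] x, p z) : ∀ᶠ z in 𝓝[≠] x, ∀ᶠ y in 𝓝 z, p y := by
  filter_upwards [eventually_eventually_nhdsWithin.2 h, self_mem_nhdsWithin] with z hz hzx
  rwa [isOpen_compl_singleton.nhdsWithin_eq hzx] at hz

lemma norm_lineMap_sub_eq_add {E : Type*} [NormedAddCommGroup E] [NormedSpace ℝ E] (a b : E)
    {s t : ℝ} (ht : 0 ≤ t) (hts : t ≤ s) :
    ‖AffineMap.lineMap a b s - a‖ = ‖AffineMap.lineMap a b t - a‖ +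
      ‖AffineMap.lineMap a b s - (AffineMap.lineMap a b t : E)‖ := by
  simp only [← dist_eq_norm, dist_lineMap_left, dist_lineMap_lineMap, Real.dist_eq,
    Real.norm_eq_abs]
  rw [abs_of_nonneg ht, abs_of_nonneg (ht.trans hts), abs_of_nonneg (sub_nonneg.2 hts)]
  ring

section Continuation

variable {𝕜 E ι : Type*} [RCLike 𝕜] [NormedAddCommGroup E] [NormedSpace 𝕜 E]
  [CompleteSpace E] [Finite ι]
  {y : ι → 𝕜 → E} {z₀ : 𝕜} {ρ : ℝ} {M K : ι → ℝ}

lemma eventually_analyticAt_and_norm_le_add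
    (hd : ∀ z ∈ Metric.closedBall z₀ ρ, (∀ i, AnalyticAt 𝕜 (y i) z) → (∀ i, ‖y i z‖ ≤ M i) →
      ∀ i, ‖deriv (y i) z‖ ≤ K i)
    {w : 𝕜} (hw : w ∈ Metric.closedBall z₀ ρ) (han : ∀ i, AnalyticAt 𝕜 (y i) w)
    (hM : ∀ i, ‖y i w‖ < M i) :
    ∀ᶠ z in 𝓝[Metric.closedBall z₀ ρ] w, ∀ i,
      AnalyticAt 𝕜 (y i) z ∧ ‖y i z‖ ≤ ‖y i w‖ + K i * ‖z - w‖ := by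
  have hev : ∀ᶠ z in 𝓝 w, ∀ i, AnalyticAt 𝕜 (y i) z ∧ ‖y i z‖ < M i :=
    eventually_all.2 fun i => (han i).eventually_analyticAt.and
      ((han i).continuousAt.norm.eventually_lt continuousAt_const (hM i))
  obtain ⟨ε, hε, hball⟩ := Metric.eventually_nhds_iff_ball.1 hev
  have hsub : ∀ z ∈ Metric.ball w ε ∩ Metric.closedBall z₀ ρ, ∀ i, ‖deriv (y i) z‖ ≤ K i :=
    fun z hz => hd z hz.2 (fun i => (hball z hz.1 i).1) fun i => (hball z hz.1 i).2.le
  filter_upwards [inter_mem_nhdsWithin _ (Metric.ball_mem_nhds w hε)] with z hz i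
  refine ⟨(hball z hz.2 i).1, ?_⟩
  have hmv := Convex.norm_image_sub_le_of_norm_deriv_le (𝕜 := 𝕜)
    (fun v hv => (hball v hv.1 i).1.differentiableAt) (fun v hv => hsub v hv i)
    ((convex_ball w ε).inter (convex_closedBall z₀ ρ)) ⟨Metric.mem_ball_self hε, hw⟩
    ⟨hz.2, hz.1⟩
  linarith [norm_le_norm_add_norm_sub' (y i z) (y i w)]

/- A meromorphic function in normal form stays analytic at a limit of points where it is bounded,
so the a priori bound propagates along every ray issuing from `z₀`. -/
theorem analyticAt_and_norm_le_of_norm_deriv_le (hnf : ∀ i x, MeromorphicNFAt (y i) x)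
    (han : ∀ i, AnalyticAt 𝕜 (y i) z₀) (hK : ∀ i, 0 ≤ K i)
    (hM : ∀ i, ‖y i z₀‖ + K i * ρ < M i)
    (hd : ∀ z ∈ Metric.closedBall z₀ ρ, (∀ i, AnalyticAt 𝕜 (y i) z) → (∀ i, ‖y i z‖ ≤ M i) →
      ∀ i, ‖deriv (y i) z‖ ≤ K i)
    {x : 𝕜} (hx : x ∈ Metric.closedBall z₀ ρ) (i : ι) :
    AnalyticAt 𝕜 (y i) x ∧ ‖y i x‖ ≤ ‖y i z₀‖ + K i * ‖x - z₀‖ := by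
  set S : Set 𝕜 := {w | ∀ i, AnalyticAt 𝕜 (y i) w ∧ ‖y i w‖ ≤ ‖y i z₀‖ + K i * ‖w - z₀‖}
  set ray : ℝ → 𝕜 := ⇑(AffineMap.lineMap (k := ℝ) z₀ x) with ray_def
  have hray : Continuous ray := AffineMap.lineMap_continuous
  have hmem : ∀ t ∈ Set.Icc (0 : ℝ) 1, ray t ∈ Metric.closedBall z₀ ρ := fun t ht =>
    (convex_closedBall z₀ ρ).segment_subset (Metric.mem_closedBall_self
      (dist_nonneg.trans hx)) hx (segment_eq_image_lineMap ℝ z₀ x ▸ Set.mem_image_of_mem _ ht)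
  have hclosed : IsClosed S := by
    simp only [S, Set.ofPred_forall]
    exact isClosed_iInter fun i => isClosed_setOf_analyticAt_and_norm_le (hnf i) (by fun_prop)
  have hsub : Set.Icc (0 : ℝ) 1 ⊆ ray ⁻¹' S := by
    refine ((hclosed.preimage hray).inter isClosed_Icc).Icc_subset_of_forall_mem_nhdsWithin
      (by simp [S, ray_def, han]) ?_
    rintro t ⟨htS, ht⟩
    have htball := hmem t ⟨ht.1, ht.2.le⟩
    have hlt : ∀ i, ‖y i (ray t)‖ < M i := fun i => by
      refine (htS i).2.trans_lt (lt_of_le_of_lt ?_ (hM i))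
      gcongr
      · exact hK i
      · exact mem_closedBall_iff_norm.1 htball
    have hto : Tendsto ray (𝓝[>] t) (𝓝[Metric.closedBall z₀ ρ] (ray t)) := by
      refine tendsto_nhdsWithin_iff.2 ⟨hray.continuousAt.mono_left nhdsWithin_le_nhds, ?_⟩
      filter_upwards [Ioo_mem_nhdsGT ht.2] with s hs
      exact hmem s ⟨ht.1.trans hs.1.le, hs.2.le⟩
    filter_upwards [self_mem_nhdsWithin, hto.eventually
      (eventually_analyticAt_and_norm_le_add hd htball (fun i => (htS i).1) hlt)] with s hts hs i
    refine ⟨(hs i).1, (hs i).2.trans ?_⟩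
    rw [norm_lineMap_sub_eq_add z₀ x ht.1 (le_of_lt hts), mul_add, ← add_assoc]
    gcongr
    exact (htS i).2
  have hx1 : ray 1 = x := AffineMap.lineMap_apply_one _ _
  exact hx1 ▸ hsub (Set.right_mem_Icc.2 zero_le_one) i

end Continuation

/-- The Hamiltonian of the system, `(p³ + q³)/3 + zpq + αq + βp`, normalized so that
`p′ = -∂H/∂q` and `q′ = ∂H/∂p`. -/
noncomputable def hamiltonian (α β z p q : ℂ) : ℂ :=
  (p ^ 3 + q ^ 3) / 3 + z * p * q + α * q + β * p

/-- A solution of the Hamiltonian system whose components are in meromorphic normal form, so that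
their only points of non-analyticity are genuine poles, where both have the junk value `0`. -/
structure IsNormalizedHamSolution (α β : ℂ) (P Q : ℂ → ℂ) : Prop where
  meromorphicNFAt_fst : ∀ x, MeromorphicNFAt P x
  meromorphicNFAt_snd : ∀ x, MeromorphicNFAt Q x
  hasDerivAt_fst : ∀ z, AnalyticAt ℂ P z → AnalyticAt ℂ Q z →
    HasDerivAt P (-(Q z) ^ 2 - z * P z - α) z
  hasDerivAt_snd : ∀ z, AnalyticAt ℂ P z → AnalyticAt ℂ Q z →
    HasDerivAt Q ((P z) ^ 2 + z * Q z + β) z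

lemma IsHamSolution.isNormalizedHamSolution {α β : ℂ} {p q : ℂ → ℂ} (h : IsHamSolution α β p q) :
    IsNormalizedHamSolution α β (toMeromorphicNFOn p Set.univ)
      (toMeromorphicNFOn q Set.univ) := by
  obtain ⟨hp, hq, hode⟩ := h
  have hev (z : ℂ) : ∀ᶠ x in 𝓝[≠] z, toMeromorphicNFOn p Set.univ =ᶠ[𝓝 x] p ∧
      toMeromorphicNFOn q Set.univ =ᶠ[𝓝 x] q ∧ AnalyticAt ℂ p x ∧ AnalyticAt ℂ q x := by
    filter_upwards [eventually_nhdsNE_eventually_nhds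
        (hp.toMeromorphicNFOn_eq_self_on_nhdsNE (Set.mem_univ z)),
      eventually_nhdsNE_eventually_nhds
        (hq.toMeromorphicNFOn_eq_self_on_nhdsNE (Set.mem_univ z)),
      (hp z trivial).eventually_analyticAt, (hq z trivial).eventually_analyticAt]
      with x hpx hqx hap haq using ⟨hpx, hqx, hap, haq⟩
  refine ⟨fun x => meromorphicNFOn_toMeromorphicNFOn _ _ (Set.mem_univ x),
    fun x => meromorphicNFOn_toMeromorphicNFOn _ _ (Set.mem_univ x), fun z hP hQ => ?_,
    fun z hP hQ => ?_⟩
  all_goals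
    have hPc := hP.continuousAt
    have hQc := hQ.continuousAt
  · refine hasDerivAt_of_eventually_nhdsNE_deriv_eq hP
      (g := fun x => -(toMeromorphicNFOn q Set.univ x) ^ 2 -
        x * toMeromorphicNFOn p Set.univ x - α) (by fun_prop) ?_
    filter_upwards [hev z] with x ⟨hpx, hqx, hap, haq⟩
    rw [hpx.deriv_eq, hpx.eq_of_nhds, hqx.eq_of_nhds, (hode x hap haq).1]
  · refine hasDerivAt_of_eventually_nhdsNE_deriv_eq hQ
      (g := fun x => (toMeromorphicNFOn p Set.univ x) ^ 2 +
        x * toMeromorphicNFOn q Set.univ x + β) (by fun_prop) ?_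
    filter_upwards [hev z] with x ⟨hpx, hqx, hap, haq⟩
    rw [hqx.deriv_eq, hpx.eq_of_nhds, hqx.eq_of_nhds, (hode x hap haq).2]

section CubeRoot

variable {α β ζ : ℂ}

lemma IsNormalizedHamSolution.rotate {P Q : ℂ → ℂ} (h : IsNormalizedHamSolution α β P Q)
    (hζ : ζ ^ 3 = 1) :
    IsNormalizedHamSolution (ζ * α) (ζ ^ 2 * β) (fun z => ζ * P z) (fun z => ζ ^ 2 * Q z) := by
  have hζ0 : ζ ≠ 0 := by rintro rfl; norm_num at hζ
  have hζ2 : ζ ^ 2 ≠ 0 := pow_ne_zero 2 hζ0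
  refine ⟨fun x => (meromorphicNFAt_mul_iff_right analyticAt_const hζ0).2
      (h.meromorphicNFAt_fst x),
    fun x => (meromorphicNFAt_mul_iff_right analyticAt_const hζ2).2 (h.meromorphicNFAt_snd x),
    fun z hP hQ => ?_, fun z hP hQ => ?_⟩
  all_goals
    replace hP := (analyticAt_iff_analytic_mul analyticAt_const hζ0).2 hP
    replace hQ := (analyticAt_iff_analytic_mul analyticAt_const hζ2).2 hQ
  · refine ((h.hasDerivAt_fst z hP hQ).const_mul ζ).congr_deriv ?_
    linear_combination (ζ * (Q z) ^ 2) * hζ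
  · refine ((h.hasDerivAt_snd z hP hQ).const_mul (ζ ^ 2)).congr_deriv ?_
    ring

lemma hamiltonian_rotate (hζ : ζ ^ 3 = 1) (z p q : ℂ) :
    hamiltonian (ζ * α) (ζ ^ 2 * β) z (ζ * p) (ζ ^ 2 * q) = hamiltonian α β z p q := by
  unfold hamiltonian
  linear_combination (p ^ 3 / 3 + (ζ ^ 3 + 1) * q ^ 3 / 3 + z * p * q + α * q + β * p) * hζ

end CubeRoot

lemma IsNormalizedHamSolution.hasDerivAt_hamiltonian {α β z : ℂ} {P Q : ℂ → ℂ}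
    (h : IsNormalizedHamSolution α β P Q) (hP : AnalyticAt ℂ P z) (hQ : AnalyticAt ℂ Q z) :
    HasDerivAt (fun x => hamiltonian α β x (P x) (Q x)) (P z * Q z) z := by
  have hdP := h.hasDerivAt_fst z hP hQ
  have hdQ := h.hasDerivAt_snd z hP hQ
  refine HasDerivAt.congr_deriv (((((hdP.pow 3).add (hdQ.pow 3)).div_const 3).add
    (((hasDerivAt_id z).mul hdP).mul hdQ)).add (hdQ.const_mul α) |>.add (hdP.const_mul β)) ?_
  simp
  ring

/-- On the disc of radius `ρ` about `z`, the size of `f` is at most that of a simple pole,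
`‖f x‖ ≤ K / ‖x - y‖`; multiplying out leaves the value at the centre `y` unconstrained. -/
def HasSimplePoleBound {E : Type*} [Norm E] (f : ℂ → E) (z : ℂ) (ρ K : ℝ) : Prop :=
  ∃ y, ∀ x ∈ Metric.closedBall z ρ, ‖x - y‖ * ‖f x‖ ≤ K

lemma HasSimplePoleBound.mono {E F : Type*} [Norm E] [Norm F] {f : ℂ → E} {g : ℂ → F}
    {z w : ℂ} {ρ σ K : ℝ} (hf : HasSimplePoleBound f z ρ K)
    (hball : Metric.closedBall w σ ⊆ Metric.closedBall z ρ) (hgf : ∀ x, ‖g x‖ ≤ ‖f x‖) :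
    HasSimplePoleBound g w σ K := by
  obtain ⟨y, hy⟩ := hf
  exact ⟨y, fun x hx => (mul_le_mul_of_nonneg_left (hgf x) (norm_nonneg _)).trans
    (hy x (hball hx))⟩

/-- At `z` both components are analytic and bounded by `A`, and the Hamiltonian is bounded by
`E`: the quantities that are carried along when a solution is continued along a ray. -/
structure IsControlled (α β : ℂ) (P Q : ℂ → ℂ) (z : ℂ) (A E : ℝ) : Prop where
  analyticAt_fst : AnalyticAt ℂ P z
  analyticAt_snd : AnalyticAt ℂ Q z
  norm_fst_le : ‖P z‖ ≤ A
  norm_snd_le : ‖Q z‖ ≤ A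
  norm_hamiltonian_le : ‖hamiltonian α β z (P z) (Q z)‖ ≤ E

lemma IsControlled.mono {α β z : ℂ} {P Q : ℂ → ℂ} {A A' E E' : ℝ}
    (h : IsControlled α β P Q z A E) (hA : A ≤ A') (hE : E ≤ E') :
    IsControlled α β P Q z A' E' :=
  ⟨h.analyticAt_fst, h.analyticAt_snd, h.norm_fst_le.trans hA, h.norm_snd_le.trans hA,
    h.norm_hamiltonian_le.trans hE⟩

lemma isControlled_rotate_iff {α β ζ z : ℂ} {P Q : ℂ → ℂ} {A E : ℝ} (hζ : ζ ^ 3 = 1) :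
    IsControlled (ζ * α) (ζ ^ 2 * β) (fun z => ζ * P z) (fun z => ζ ^ 2 * Q z) z A E ↔
      IsControlled α β P Q z A E := by
  have hζ0 : ζ ≠ 0 := by rintro rfl; norm_num at hζ
  have hnorm : ‖ζ‖ = 1 := Complex.norm_eq_one_of_pow_eq_one hζ three_ne_zero
  have hP : AnalyticAt ℂ P z ↔ AnalyticAt ℂ (fun z => ζ * P z) z :=
    analyticAt_iff_analytic_mul analyticAt_const hζ0
  have hQ : AnalyticAt ℂ Q z ↔ AnalyticAt ℂ (fun z => ζ ^ 2 * Q z) z :=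
    analyticAt_iff_analytic_mul analyticAt_const (pow_ne_zero 2 hζ0)
  have hPn : ‖ζ * P z‖ = ‖P z‖ := by rw [norm_mul, hnorm, one_mul]
  have hQn : ‖ζ ^ 2 * Q z‖ = ‖Q z‖ := by rw [norm_mul, norm_pow, hnorm, one_pow, one_mul]
  have hH := hamiltonian_rotate (α := α) (β := β) hζ z (P z) (Q z)
  exact ⟨fun h => ⟨hP.2 h.1, hQ.2 h.2, hPn ▸ h.3, hQn ▸ h.4, hH ▸ h.5⟩,
    fun h => ⟨hP.1 h.1, hQ.1 h.2, hPn.symm ▸ h.3, hQn.symm ▸ h.4, hH.symm ▸ h.5⟩⟩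

section Regular

variable {α β z₀ : ℂ} {P Q : ℂ → ℂ} {B E : ℝ}

lemma norm_deriv_le_of_norm_le {α z p q : ℂ} (hB : 1 ≤ B) (hα : ‖α‖ ≤ B) (hz : ‖z‖ ≤ 2 * B)
    (hp : ‖p‖ ≤ 10002 * B) (hq : ‖q‖ ≤ 10002 * B) :
    ‖q ^ 2 + z * p + α‖ ≤ 2 * 10 ^ 8 * B ^ 2 := by
  calc ‖q ^ 2 + z * p + α‖ ≤ ‖q‖ ^ 2 + ‖z‖ * ‖p‖ + ‖α‖ :=
        norm_add₃_le.trans_eq (by simp)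
    _ ≤ (10002 * B) ^ 2 + 2 * B * (10002 * B) + B := by gcongr
    _ ≤ 2 * 10 ^ 8 * B ^ 2 := by nlinarith

lemma IsNormalizedHamSolution.analyticAt_and_norm_le_of_mem_closedBall
    (h : IsNormalizedHamSolution α β P Q) (hB : 1 ≤ B) (hα : ‖α‖ ≤ B) (hβ : ‖β‖ ≤ B)
    (hz₀ : ‖z₀‖ ≤ B) (hc : IsControlled α β P Q z₀ (10 ^ 4 * B) E) {x : ℂ}
    (hx : x ∈ Metric.closedBall z₀ (1 / (2 * 10 ^ 8 * B))) :
    (AnalyticAt ℂ P x ∧ ‖P x‖ ≤ 10001 * B) ∧ (AnalyticAt ℂ Q x ∧ ‖Q x‖ ≤ 10001 * B) := by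
  set ρ : ℝ := 1 / (2 * 10 ^ 8 * B) with hρ
  have hKρ : 2 * 10 ^ 8 * B ^ 2 * ρ = B := by rw [hρ]; field_simp
  have hρB : ρ ≤ B := by
    rw [hρ, div_le_iff₀ (by positivity)]
    nlinarith
  have hz : ∀ z ∈ Metric.closedBall z₀ ρ, ‖z‖ ≤ 2 * B := fun z hz => by
    linarith [norm_le_norm_add_norm_sub' z z₀, mem_closedBall_iff_norm.1 hz]
  have hcont := analyticAt_and_norm_le_of_norm_deriv_le (y := ![P, Q]) (z₀ := z₀) (ρ := ρ)
    (M := fun _ => 10002 * B) (K := fun _ => 2 * 10 ^ 8 * B ^ 2)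
    (by simp [Fin.forall_fin_two, h.meromorphicNFAt_fst, h.meromorphicNFAt_snd])
    (by simp [Fin.forall_fin_two, hc.analyticAt_fst, hc.analyticAt_snd])
    (fun _ => by positivity)
    (by
      simp only [Fin.forall_fin_two, hKρ, Matrix.cons_val_zero, Matrix.cons_val_one]
      constructor <;> linarith [hc.norm_fst_le, hc.norm_snd_le])
    (by
      simp only [Fin.forall_fin_two, Matrix.cons_val_zero, Matrix.cons_val_one]
      rintro w hw ⟨hP, hQ⟩ ⟨hPw, hQw⟩
      rw [(h.hasDerivAt_fst w hP hQ).deriv, (h.hasDerivAt_snd w hP hQ).deriv, neg_sub_left,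
        ← neg_add', norm_neg, add_comm (w * P w)]
      exact ⟨norm_deriv_le_of_norm_le hB hα (hz w hw) hPw hQw,
        norm_deriv_le_of_norm_le hB hβ (hz w hw) hQw hPw⟩) hx
  have hgrow : 2 * 10 ^ 8 * B ^ 2 * ‖x - z₀‖ ≤ B :=
    (mul_le_mul_of_nonneg_left (mem_closedBall_iff_norm.1 hx) (by positivity)).trans_eq hKρ
  simp only [Fin.forall_fin_two, Matrix.cons_val_zero, Matrix.cons_val_one] at hcont
  exact ⟨⟨hcont.1.1, by linarith [hcont.1.2, hc.norm_fst_le]⟩,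
    hcont.2.1, by linarith [hcont.2.2, hc.norm_snd_le]⟩

lemma IsNormalizedHamSolution.isControlled_of_mem_closedBall
    (h : IsNormalizedHamSolution α β P Q) (hB : 1 ≤ B) (hα : ‖α‖ ≤ B) (hβ : ‖β‖ ≤ B)
    (hz₀ : ‖z₀‖ ≤ B) (hc : IsControlled α β P Q z₀ (10 ^ 4 * B) E) {x : ℂ}
    (hx : x ∈ Metric.closedBall z₀ (1 / (2 * 10 ^ 8 * B))) :
    IsControlled α β P Q x (10001 * B) (E + B) := by
  have hPQ := fun z => h.analyticAt_and_norm_le_of_mem_closedBall hB hα hβ hz₀ hc (x := z)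
  have hH := Convex.norm_image_sub_le_of_norm_hasDerivWithin_le (C := 2 * 10 ^ 8 * B ^ 2)
    (fun z hz => (h.hasDerivAt_hamiltonian (hPQ z hz).1.1 (hPQ z hz).2.1).hasDerivWithinAt)
    (fun z hz => by
      rw [norm_mul]
      calc ‖P z‖ * ‖Q z‖ ≤ 10001 * B * (10001 * B) := by gcongr <;> simp [hPQ z hz]
        _ ≤ 2 * 10 ^ 8 * B ^ 2 := by nlinarith)
    (convex_closedBall z₀ _) (Metric.mem_closedBall_self (by positivity)) hx
  have hHB : 2 * 10 ^ 8 * B ^ 2 * ‖x - z₀‖ ≤ B :=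
    (mul_le_mul_of_nonneg_left (mem_closedBall_iff_norm.1 hx) (by positivity)).trans_eq
      (by field_simp)
  obtain ⟨⟨hP, hPx⟩, hQ, hQx⟩ := hPQ x hx
  refine ⟨hP, hQ, hPx, hQx, ?_⟩
  linarith [norm_le_norm_add_norm_sub' (hamiltonian α β x (P x) (Q x))
    (hamiltonian α β z₀ (P z₀) (Q z₀)), hc.norm_hamiltonian_le]

end Regular

section PoleChart

/-- The sum `P + Q` in terms of the pole coordinates `u = 1 / (P - Q)` and `v`, see
`IsPoleChart`. -/
noncomputable def poleSum (α β z u v : ℂ) : ℂ := z + u * (2 * (α + 1 - β) + u * v)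

/-- The polynomial with `u′ = 1/2 + u² · poleQuad` in the pole coordinates `u`, `v`. -/
noncomputable def poleQuad (α β z u v : ℂ) : ℂ :=
  poleSum α β z u v ^ 2 / 2 + z * poleSum α β z u v + (α + β)

/-- The Hamiltonian in the pole coordinates `u`, `v`, up to its polar part `u⁻¹ / 2`. -/
noncomputable def poleHamiltonian (α β z u v : ℂ) : ℂ :=
  v / 4 + poleSum α β z u v ^ 3 / 12 + z * poleSum α β z u v ^ 2 / 4 +
    (α + β) * poleSum α β z u v / 2

/-- The pole coordinate `v` as a function of `p` and `q`; it solves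
`p + q = poleSum α β z (p - q)⁻¹ v`. -/
noncomputable def poleCoord (α β z p q : ℂ) : ℂ :=
  (p + q - z) * (p - q) ^ 2 - 2 * (α + 1 - β) * (p - q)

/-- `u = 1 / (P - Q)` and `v = poleCoord α β z P Q` in meromorphic normal form, described by the
polynomial system that they satisfy. It is regular at those poles of `P` and `Q` where the residues
are `1` and `-1`, since `u` vanishes there. -/
structure IsPoleChart (α β : ℂ) (P Q u v : ℂ → ℂ) : Prop where
  meromorphicNFAt_fst : ∀ x, MeromorphicNFAt u x
  meromorphicNFAt_snd : ∀ x, MeromorphicNFAt v x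
  hasDerivAt_fst : ∀ z, AnalyticAt ℂ u z → AnalyticAt ℂ v z →
    HasDerivAt u (1 / 2 + u z ^ 2 * poleQuad α β z (u z) (v z)) z
  hasDerivAt_snd : ∀ z, AnalyticAt ℂ u z → AnalyticAt ℂ v z →
    HasDerivAt v (-2 * poleQuad α β z (u z) (v z) * (α + 1 - β + u z * v z)) z
  eq_of_ne_zero : ∀ z, AnalyticAt ℂ u z → AnalyticAt ℂ v z → u z ≠ 0 →
    (AnalyticAt ℂ P z ∧ P z = (poleSum α β z (u z) (v z) + (u z)⁻¹) / 2) ∧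
      (AnalyticAt ℂ Q z ∧ Q z = (poleSum α β z (u z) (v z) - (u z)⁻¹) / 2)

variable {α β : ℂ} {P Q u v : ℂ → ℂ}

lemma hamiltonian_poleSum {α β z u v : ℂ} (hu : u ≠ 0) :
    hamiltonian α β z ((poleSum α β z u v + u⁻¹) / 2) ((poleSum α β z u v - u⁻¹) / 2) =
      poleHamiltonian α β z u v + u⁻¹ / 2 := by
  simp only [hamiltonian, poleHamiltonian, poleSum]
  field_simp
  ring

lemma IsPoleChart.hasDerivAt_poleSum (hc : IsPoleChart α β P Q u v) {z : ℂ}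
    (hu : AnalyticAt ℂ u z) (hv : AnalyticAt ℂ v z) :
    HasDerivAt (fun x => poleSum α β x (u x) (v x)) (u z * v z + α - β + 2) z := by
  have hdu := hc.hasDerivAt_fst z hu hv
  refine ((hasDerivAt_id z).add (hdu.mul
    ((hdu.mul (hc.hasDerivAt_snd z hu hv)).const_add (2 * (α + 1 - β))))).congr_deriv ?_
  simp only [Pi.mul_apply]
  ring

lemma IsPoleChart.hasDerivAt_poleHamiltonian (hc : IsPoleChart α β P Q u v) {z : ℂ}
    (hu : AnalyticAt ℂ u z) (hv : AnalyticAt ℂ v z) :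
    HasDerivAt (fun x => poleHamiltonian α β x (u x) (v x))
      (poleSum α β z (u z) (v z) ^ 2 / 4 + poleQuad α β z (u z) (v z) / 2) z := by
  have hS := hc.hasDerivAt_poleSum hu hv
  refine (((((hc.hasDerivAt_snd z hu hv).div_const 4).add ((hS.pow 3).div_const 12)).add
    (((hasDerivAt_id z).mul (hS.pow 2)).div_const 4)).add
    ((hS.const_mul (α + β)).div_const 2)).congr_deriv ?_
  simp only [poleQuad, Pi.pow_apply, id]
  ring

lemma poleSum_poleCoord {p q : ℂ} (z : ℂ) (hne : p - q ≠ 0) :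
    poleSum α β z (p - q)⁻¹ (poleCoord α β z p q) = p + q := by
  simp only [poleSum, poleCoord]
  field_simp
  ring

variable {z : ℂ}

lemma IsNormalizedHamSolution.hasDerivAt_inv_sub (h : IsNormalizedHamSolution α β P Q)
    (hP : AnalyticAt ℂ P z) (hQ : AnalyticAt ℂ Q z) (hne : P z - Q z ≠ 0) :
    HasDerivAt (fun x => (P x - Q x)⁻¹) (1 / 2 + (P z - Q z)⁻¹ ^ 2 *
      poleQuad α β z (P z - Q z)⁻¹ (poleCoord α β z (P z) (Q z))) z := by
  refine (((h.hasDerivAt_fst z hP hQ).sub (h.hasDerivAt_snd z hP hQ)).inv hne).congr_deriv ?_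
  rw [poleQuad, poleSum_poleCoord z hne, Pi.sub_apply]
  field_simp
  ring

lemma IsNormalizedHamSolution.hasDerivAt_poleCoord (h : IsNormalizedHamSolution α β P Q)
    (hP : AnalyticAt ℂ P z) (hQ : AnalyticAt ℂ Q z) (hne : P z - Q z ≠ 0) :
    HasDerivAt (fun x => poleCoord α β x (P x) (Q x))
      (-2 * poleQuad α β z (P z - Q z)⁻¹ (poleCoord α β z (P z) (Q z)) *
        (α + 1 - β + (P z - Q z)⁻¹ * poleCoord α β z (P z) (Q z))) z := by
  have hdP := h.hasDerivAt_fst z hP hQ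
  have hdQ := h.hasDerivAt_snd z hP hQ
  refine ((((hdP.add hdQ).sub (hasDerivAt_id z)).mul ((hdP.sub hdQ).pow 2)).sub
    ((hdP.sub hdQ).const_mul (2 * (α + 1 - β)))).congr_deriv ?_
  rw [poleQuad, poleSum_poleCoord z hne, poleCoord]
  simp only [Pi.pow_apply, Pi.sub_apply, Pi.add_apply, id_eq, Nat.cast_ofNat,
    Nat.add_one_sub_one, pow_one]
  field_simp
  ring

lemma IsNormalizedHamSolution.isPoleChart (h : IsNormalizedHamSolution α β P Q)
    (hne : ∀ x, ∀ᶠ w in 𝓝[≠] x, P w - Q w ≠ 0)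
    (hunf : ∀ x, MeromorphicNFAt u x) (hvnf : ∀ x, MeromorphicNFAt v x)
    (hu : ∀ x, u =ᶠ[𝓝[≠] x] fun w => (P w - Q w)⁻¹)
    (hv : ∀ x, v =ᶠ[𝓝[≠] x] fun w => poleCoord α β w (P w) (Q w)) : IsPoleChart α β P Q u v := by
  have hev (x : ℂ) : ∀ᶠ w in 𝓝[≠] x, (AnalyticAt ℂ P w ∧ AnalyticAt ℂ Q w ∧ P w - Q w ≠ 0) ∧
      u =ᶠ[𝓝 w] (fun w => (P w - Q w)⁻¹) ∧ v =ᶠ[𝓝 w] fun w => poleCoord α β w (P w) (Q w) := by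
    filter_upwards [(h.meromorphicNFAt_fst x).meromorphicAt.eventually_analyticAt,
      (h.meromorphicNFAt_snd x).meromorphicAt.eventually_analyticAt, hne x,
      eventually_nhdsNE_eventually_nhds (hu x), eventually_nhdsNE_eventually_nhds (hv x)]
      with w hPw hQw hw huw hvw using ⟨⟨hPw, hQw, hw⟩, huw, hvw⟩
  refine ⟨hunf, hvnf, fun z huz hvz => ?_, fun z huz hvz => ?_, fun z huz hvz hz => ⟨?_, ?_⟩⟩
  all_goals
    have huc := huz.continuousAt
    have hvc := hvz.continuousAt
  · refine hasDerivAt_of_eventually_nhdsNE_deriv_eq huz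
      (g := fun x => 1 / 2 + u x ^ 2 * poleQuad α β x (u x) (v x))
      (by unfold poleQuad poleSum; fun_prop) ((hev z).mono ?_)
    rintro w ⟨⟨hP, hQ, hw⟩, huw, hvw⟩
    rw [huw.deriv_eq, huw.eq_of_nhds, hvw.eq_of_nhds, (h.hasDerivAt_inv_sub hP hQ hw).deriv]
  · refine hasDerivAt_of_eventually_nhdsNE_deriv_eq hvz
      (g := fun x => -2 * poleQuad α β x (u x) (v x) * (α + 1 - β + u x * v x))
      (by unfold poleQuad poleSum; fun_prop) ((hev z).mono ?_)
    rintro w ⟨⟨hP, hQ, hw⟩, huw, hvw⟩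
    rw [hvw.deriv_eq, huw.eq_of_nhds, hvw.eq_of_nhds, (h.hasDerivAt_poleCoord hP hQ hw).deriv]
  · refine analyticAt_and_eq_of_eventuallyEq_nhdsNE (h.meromorphicNFAt_fst z)
      (g := fun x => (poleSum α β x (u x) (v x) + (u x)⁻¹) / 2)
      (by unfold poleSum; fun_prop (disch := assumption)) ((hev z).mono ?_)
    rintro w ⟨⟨-, -, hw⟩, huw, hvw⟩
    simp only [huw.eq_of_nhds, hvw.eq_of_nhds, poleSum_poleCoord w hw, inv_inv]
    ring
  · refine analyticAt_and_eq_of_eventuallyEq_nhdsNE (h.meromorphicNFAt_snd z)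
      (g := fun x => (poleSum α β x (u x) (v x) - (u x)⁻¹) / 2)
      (by unfold poleSum; fun_prop (disch := assumption)) ((hev z).mono ?_)
    rintro w ⟨⟨-, -, hw⟩, huw, hvw⟩
    simp only [huw.eq_of_nhds, hvw.eq_of_nhds, poleSum_poleCoord w hw, inv_inv]
    ring

theorem IsNormalizedHamSolution.exists_isPoleChart (h : IsNormalizedHamSolution α β P Q)
    (hP : AnalyticAt ℂ P z) (hQ : AnalyticAt ℂ Q z) (hne : P z - Q z ≠ 0) :
    ∃ u v, IsPoleChart α β P Q u v ∧ (AnalyticAt ℂ u z ∧ u z = (P z - Q z)⁻¹) ∧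
      (AnalyticAt ℂ v z ∧ v z = poleCoord α β z (P z) (Q z)) := by
  have hPm (x : ℂ) := (h.meromorphicNFAt_fst x).meromorphicAt
  have hQm (x : ℂ) := (h.meromorphicNFAt_snd x).meromorphicAt
  have hum : MeromorphicOn (fun w => (P w - Q w)⁻¹) Set.univ :=
    fun x _ => ((hPm x).sub (hQm x)).inv
  have hvm : MeromorphicOn (fun w => poleCoord α β w (P w) (Q w)) Set.univ := fun x _ =>
    ((((hPm x).add (hQm x)).sub (.id x)).mul (((hPm x).sub (hQm x)).pow 2)).sub
      ((MeromorphicAt.const (2 * (α + 1 - β)) x).mul ((hPm x).sub (hQm x)))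
  have hue (x : ℂ) := hum.toMeromorphicNFOn_eq_self_on_nhdsNE (Set.mem_univ x)
  have hve (x : ℂ) := hvm.toMeromorphicNFOn_eq_self_on_nhdsNE (Set.mem_univ x)
  have hunf (x : ℂ) := meromorphicNFOn_toMeromorphicNFOn (fun w => (P w - Q w)⁻¹) Set.univ
    (Set.mem_univ x)
  have hvnf (x : ℂ) := meromorphicNFOn_toMeromorphicNFOn
    (fun w => poleCoord α β w (P w) (Q w)) Set.univ (Set.mem_univ x)
  have hsub := eventually_nhdsNE_ne_zero (fun x => (hPm x).sub (hQm x))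
    (hP.sub hQ).continuousAt hne
  exact ⟨_, _, h.isPoleChart hsub hunf hvnf hue hve,
    analyticAt_and_eq_of_eventuallyEq_nhdsNE (hunf z) ((hP.sub hQ).inv hne) (hue z),
    analyticAt_and_eq_of_eventuallyEq_nhdsNE (hvnf z)
      (by unfold poleCoord; fun_prop) (hve z)⟩

end PoleChart

/-- The box in pole coordinates inside which the polynomial system is close to `u′ = 1/2`. -/
structure InPoleBox (α β z u v : ℂ) (B : ℝ) : Prop where
  one_le : 1 ≤ B
  norm_fst_param_le : ‖α‖ ≤ B
  norm_snd_param_le : ‖β‖ ≤ B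
  norm_point_le : ‖z‖ ≤ 3 * B
  norm_fst_le : ‖u‖ ≤ 1 / (1000 * B)
  norm_snd_le : ‖v‖ ≤ 4 * 10 ^ 8 * B ^ 3

namespace InPoleBox

variable {α β z u v : ℂ} {B : ℝ}

lemma norm_add_mul_le (h : InPoleBox α β z u v B) (c : ℝ) (hc : |c| ≤ 2) :
    ‖c * (α + 1 - β) + u * v‖ ≤ 401000 * B ^ 2 := by
  have hB := h.one_le
  have hκ : ‖α + 1 - β‖ ≤ 3 * B := by
    have h1 := norm_sub_le (α + 1) β
    have h2 := norm_add_le α 1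
    rw [norm_one] at h2
    linarith [h.norm_fst_param_le, h.norm_snd_param_le]
  calc ‖c * (α + 1 - β) + u * v‖ ≤ |c| * ‖α + 1 - β‖ + ‖u‖ * ‖v‖ :=
        (norm_add_le _ _).trans_eq (by simp)
    _ ≤ 2 * (3 * B) + 1 / (1000 * B) * (4 * 10 ^ 8 * B ^ 3) := by
        gcongr
        exacts [h.norm_fst_le, h.norm_snd_le]
    _ = 6 * B + 400000 * B ^ 2 := by field_simp; ring
    _ ≤ 401000 * B ^ 2 := by nlinarith

lemma norm_poleSum_le (h : InPoleBox α β z u v B) : ‖poleSum α β z u v‖ ≤ 404 * B := by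
  have hB := h.one_le
  have hw := h.norm_add_mul_le 2 (by norm_num)
  push_cast at hw
  calc ‖poleSum α β z u v‖ ≤ ‖z‖ + ‖u‖ * ‖2 * (α + 1 - β) + u * v‖ :=
        (norm_add_le _ _).trans_eq (by rw [norm_mul])
    _ ≤ 3 * B + 1 / (1000 * B) * (401000 * B ^ 2) := by
        gcongr
        exacts [h.norm_point_le, h.norm_fst_le]
    _ = 404 * B := by field_simp; norm_num

lemma norm_poleQuad_le (h : InPoleBox α β z u v B) : ‖poleQuad α β z u v‖ ≤ 83000 * B ^ 2 := by
  have hB := h.one_le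
  calc ‖poleQuad α β z u v‖
      ≤ ‖poleSum α β z u v‖ ^ 2 / 2 + ‖z‖ * ‖poleSum α β z u v‖ + (‖α‖ + ‖β‖) := by
        refine norm_add₃_le.trans (add_le_add (le_of_eq (by simp)) (norm_add_le _ _))
    _ ≤ (404 * B) ^ 2 / 2 + 3 * B * (404 * B) + (B + B) := by
        gcongr
        exacts [h.norm_poleSum_le, h.norm_point_le, h.norm_poleSum_le, h.norm_fst_param_le,
          h.norm_snd_param_le]
    _ ≤ 83000 * B ^ 2 := by nlinarith

lemma norm_sq_mul_poleQuad_le (h : InPoleBox α β z u v B) :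
    ‖u ^ 2 * poleQuad α β z u v‖ ≤ 1 / 10 := by
  have hB := h.one_le
  calc ‖u ^ 2 * poleQuad α β z u v‖ = ‖u‖ ^ 2 * ‖poleQuad α β z u v‖ := by
        rw [norm_mul, norm_pow]
    _ ≤ (1 / (1000 * B)) ^ 2 * (83000 * B ^ 2) := by
        gcongr
        exacts [h.norm_fst_le, h.norm_poleQuad_le]
    _ ≤ 1 / 10 := by field_simp; norm_num

lemma norm_deriv_fst_le (h : InPoleBox α β z u v B) :
    ‖1 / 2 + u ^ 2 * poleQuad α β z u v‖ ≤ 3 / 5 :=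
  calc ‖1 / 2 + u ^ 2 * poleQuad α β z u v‖ ≤ 1 / 2 + ‖u ^ 2 * poleQuad α β z u v‖ :=
        (norm_add_le _ _).trans_eq (by simp)
    _ ≤ 3 / 5 := by linarith [h.norm_sq_mul_poleQuad_le]

lemma norm_deriv_snd_le (h : InPoleBox α β z u v B) :
    ‖-2 * poleQuad α β z u v * (α + 1 - β + u * v)‖ ≤ 8 * 10 ^ 10 * B ^ 4 := by
  have hB := h.one_le
  have hw := h.norm_add_mul_le 1 (by norm_num)
  simp only [Complex.ofReal_one, one_mul] at hw
  calc ‖-2 * poleQuad α β z u v * (α + 1 - β + u * v)‖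
      = 2 * ‖poleQuad α β z u v‖ * ‖α + 1 - β + u * v‖ := by simp
    _ ≤ 2 * (83000 * B ^ 2) * (401000 * B ^ 2) := by
        gcongr
        exact h.norm_poleQuad_le
    _ ≤ 8 * 10 ^ 10 * B ^ 4 := by nlinarith [pow_pos (zero_lt_one.trans_le hB) 4]

lemma norm_deriv_poleHamiltonian_le (h : InPoleBox α β z u v B) :
    ‖poleSum α β z u v ^ 2 / 4 + poleQuad α β z u v / 2‖ ≤ 83000 * B ^ 2 := by
  calc ‖poleSum α β z u v ^ 2 / 4 + poleQuad α β z u v / 2‖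
      ≤ ‖poleSum α β z u v‖ ^ 2 / 4 + ‖poleQuad α β z u v‖ / 2 :=
        (norm_add_le _ _).trans_eq (by simp)
    _ ≤ (404 * B) ^ 2 / 4 + 83000 * B ^ 2 / 2 := by
        gcongr
        exacts [h.norm_poleSum_le, h.norm_poleQuad_le]
    _ ≤ 83000 * B ^ 2 := by nlinarith

end InPoleBox

/-- A pole chart which is regular, with values in the pole box, throughout `s`. -/
structure IsPoleChartOn (α β : ℂ) (P Q u v : ℂ → ℂ) (s : Set ℂ) (B : ℝ) : Prop
    extends IsPoleChart α β P Q u v where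
  analyticAt_fst : ∀ x ∈ s, AnalyticAt ℂ u x
  analyticAt_snd : ∀ x ∈ s, AnalyticAt ℂ v x
  inPoleBox : ∀ x ∈ s, InPoleBox α β x (u x) (v x) B

namespace IsPoleChartOn

variable {α β : ℂ} {P Q u v : ℂ → ℂ} {s : Set ℂ} {B : ℝ}

lemma le_norm_sub (h : IsPoleChartOn α β P Q u v s B) (hs : Convex ℝ s) {x y : ℂ} (hx : x ∈ s)
    (hy : y ∈ s) : 2 / 5 * ‖x - y‖ ≤ ‖u x - u y‖ := by
  have hmv := hs.norm_image_sub_le_of_norm_hasDerivWithin_le (f := fun x => x / 2 - u x)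
    (f' := fun x => -(u x ^ 2 * poleQuad α β x (u x) (v x))) (C := 1 / 10)
    (fun z hz => ((((hasDerivAt_id z).div_const 2).sub (h.hasDerivAt_fst z
      (h.analyticAt_fst z hz) (h.analyticAt_snd z hz))).congr_deriv (by ring)).hasDerivWithinAt)
    (fun z hz => (norm_neg _).trans_le (h.inPoleBox z hz).norm_sq_mul_poleQuad_le) hy hx
  have hsplit : ‖(x - y) / 2‖ ≤ ‖u x - u y‖ + ‖x / 2 - u x - (y / 2 - u y)‖ :=
    (congrArg norm (by ring)).trans_le (norm_add_le _ _)
  rw [norm_div, Complex.norm_two] at hsplit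
  linarith

lemma norm_poleHamiltonian_sub_le (h : IsPoleChartOn α β P Q u v s B) (hs : Convex ℝ s)
    {x y : ℂ} (hx : x ∈ s) (hy : y ∈ s) :
    ‖poleHamiltonian α β x (u x) (v x) - poleHamiltonian α β y (u y) (v y)‖ ≤
      83000 * B ^ 2 * ‖x - y‖ :=
  hs.norm_image_sub_le_of_norm_hasDerivWithin_le
    (f := fun x => poleHamiltonian α β x (u x) (v x))
    (fun z hz => (h.hasDerivAt_poleHamiltonian (h.analyticAt_fst z hz)
      (h.analyticAt_snd z hz)).hasDerivWithinAt)
    (fun z hz => (h.inPoleBox z hz).norm_deriv_poleHamiltonian_le) hy hx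

lemma norm_fst_le_and_norm_snd_le (h : IsPoleChartOn α β P Q u v s B) {x : ℂ} (hx : x ∈ s)
    (hux : u x ≠ 0) :
    ‖P x‖ ≤ (404 * B + ‖u x‖⁻¹) / 2 ∧ ‖Q x‖ ≤ (404 * B + ‖u x‖⁻¹) / 2 := by
  obtain ⟨⟨-, hP⟩, -, hQ⟩ :=
    h.eq_of_ne_zero x (h.analyticAt_fst x hx) (h.analyticAt_snd x hx) hux
  have hσ := (h.inPoleBox x hx).norm_poleSum_le
  rw [hP, hQ, norm_div, norm_div, Complex.norm_two, ← norm_inv]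
  constructor <;> gcongr
  exacts [(norm_add_le _ _).trans (by gcongr), (norm_sub_le _ _).trans (by gcongr)]

lemma isControlled (h : IsPoleChartOn α β P Q u v s B) {x : ℂ} (hx : x ∈ s)
    (hux : 1 / (10 ^ 4 * B) ≤ ‖u x‖) :
    IsControlled α β P Q x (10 ^ 4 * B)
      (‖poleHamiltonian α β x (u x) (v x)‖ + 5000 * B) := by
  have hB := (h.inPoleBox x hx).one_le
  have hu0 : u x ≠ 0 := norm_pos_iff.1 (lt_of_lt_of_le (by positivity) hux)
  have hinv : ‖u x‖⁻¹ ≤ 10 ^ 4 * B := inv_le_of_inv_le₀ (by positivity) (by simpa using hux)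
  obtain ⟨⟨hPa, hP⟩, hQa, hQ⟩ :=
    h.eq_of_ne_zero x (h.analyticAt_fst x hx) (h.analyticAt_snd x hx) hu0
  obtain ⟨hPn, hQn⟩ := h.norm_fst_le_and_norm_snd_le hx hu0
  refine ⟨hPa, hQa, by linarith, by linarith, ?_⟩
  rw [hP, hQ, hamiltonian_poleSum hu0]
  refine (norm_add_le _ _).trans ?_
  rw [norm_div, Complex.norm_two, norm_inv]
  linarith

/- The centre is the point of the disc where `‖u‖` is smallest, be it a zero of `u` or not. -/
lemma hasSimplePoleBound (h : IsPoleChartOn α β P Q u v s B) {z : ℂ} {η : ℝ} (hη0 : 0 ≤ η)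
    (hη : η ≤ 1 / (2000 * B)) (hs : Metric.closedBall z η ⊆ s) :
    HasSimplePoleBound (fun x => (P x, Q x)) z η 3 := by
  have hB := (h.inPoleBox z (hs (Metric.mem_closedBall_self hη0))).one_le
  have hcont : ContinuousOn (fun x => ‖u x‖) (Metric.closedBall z η) := fun x hx =>
    (h.analyticAt_fst x (hs hx)).continuousAt.norm.continuousWithinAt
  obtain ⟨y, hy, hmin⟩ := (isCompact_closedBall z η).exists_isMinOn
    ⟨z, Metric.mem_closedBall_self hη0⟩ hcont
  refine ⟨y, fun x hx => ?_⟩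
  rcases eq_or_ne x y with rfl | hxy
  · simp
  have hxy0 : 0 < ‖x - y‖ := norm_sub_pos_iff.2 hxy
  have hlow : ‖x - y‖ / 5 ≤ ‖u x‖ := by
    have hux := IsPoleChartOn.le_norm_sub (s := Metric.closedBall z η)
      ⟨h.toIsPoleChart, fun x hx => h.analyticAt_fst x (hs hx),
        fun x hx => h.analyticAt_snd x (hs hx), fun x hx => h.inPoleBox x (hs hx)⟩
      (convex_closedBall z η) hx hy
    linarith [norm_sub_le (u x) (u y), isMinOn_iff.1 hmin x hx]
  have hu0 : 0 < ‖u x‖ := by linarith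
  have hdist : ‖x - y‖ ≤ 1 / (1000 * B) := by
    have hhalf : 1 / (2000 * B) + 1 / (2000 * B) = 1 / (1000 * B) := by field_simp; norm_num
    linarith [norm_sub_le_norm_sub_add_norm_sub x z y, mem_closedBall_iff_norm.1 hx,
      mem_closedBall_iff_norm'.1 hy]
  have hbound : ‖(P x, Q x)‖ ≤ (404 * B + ‖u x‖⁻¹) / 2 :=
    norm_prod_le_iff.2 (h.norm_fst_le_and_norm_snd_le (hs hx) (norm_pos_iff.1 hu0))
  calc ‖x - y‖ * ‖(P x, Q x)‖ ≤ ‖x - y‖ * ((404 * B + ‖u x‖⁻¹) / 2) := by gcongr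
    _ = (‖x - y‖ * (404 * B) + ‖x - y‖ / ‖u x‖) / 2 := by ring
    _ ≤ (1 / (1000 * B) * (404 * B) + 5) / 2 := by
        gcongr
        rw [div_le_iff₀ hu0]
        linarith
    _ ≤ 3 := by field_simp; norm_num

end IsPoleChartOn

/-- The situation in which a solution is handed over to the pole chart: `P` and `Q` are large and
nearly opposite. -/
structure IsChartEntry (α β : ℂ) (P Q : ℂ → ℂ) (z : ℂ) (B : ℝ) : Prop where
  one_le : 1 ≤ B
  norm_fst_param_le : ‖α‖ ≤ B
  norm_snd_param_le : ‖β‖ ≤ B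
  norm_point_le : ‖z‖ ≤ 2 * B
  isControlled : IsControlled α β P Q z (10001 * B) (2 * B ^ 3)
  norm_add_le : ‖P z + Q z‖ ≤ 900 * B
  le_norm_sub : 10 ^ 4 * B ≤ ‖P z - Q z‖

lemma poleCoord_eq (α β z p q : ℂ) :
    poleCoord α β z p q = 4 * hamiltonian α β z p q - 2 * (p - q) -
      ((p + q) ^ 3 / 3 + z * (p + q) ^ 2 + 2 * (α + β) * (p + q)) := by
  unfold poleCoord hamiltonian
  ring

namespace IsChartEntry

variable {α β z : ℂ} {P Q : ℂ → ℂ} {B : ℝ}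

lemma norm_sub_le (h : IsChartEntry α β P Q z B) : ‖P z - Q z‖ ≤ 20002 * B := by
  linarith [_root_.norm_sub_le (P z) (Q z), h.isControlled.norm_fst_le,
    h.isControlled.norm_snd_le]

lemma sub_ne_zero (h : IsChartEntry α β P Q z B) : P z - Q z ≠ 0 :=
  norm_pos_iff.1 (lt_of_lt_of_le (by linarith [h.one_le]) h.le_norm_sub)

lemma norm_inv_sub_le (h : IsChartEntry α β P Q z B) :
    ‖(P z - Q z)⁻¹‖ ≤ 1 / (10 ^ 4 * B) := by
  have hB := h.one_le
  rw [norm_inv, one_div]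
  exact inv_anti₀ (by positivity) h.le_norm_sub

lemma norm_poleCoord_le (h : IsChartEntry α β P Q z B) :
    ‖poleCoord α β z (P z) (Q z)‖ ≤ 3 * 10 ^ 8 * B ^ 3 := by
  have hB := h.one_le
  have hαβ : ‖α + β‖ ≤ 2 * B := by
    linarith [_root_.norm_add_le α β, h.norm_fst_param_le, h.norm_snd_param_le]
  calc ‖poleCoord α β z (P z) (Q z)‖
      ≤ 4 * ‖hamiltonian α β z (P z) (Q z)‖ + 2 * ‖P z - Q z‖ + (‖P z + Q z‖ ^ 3 / 3 +
          ‖z‖ * ‖P z + Q z‖ ^ 2 + 2 * ‖α + β‖ * ‖P z + Q z‖) := by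
        rw [poleCoord_eq]
        refine (_root_.norm_sub_le _ _).trans (add_le_add ?_ ?_)
        · exact (_root_.norm_sub_le _ _).trans_eq (by simp)
        · exact norm_add₃_le.trans_eq (by simp)
    _ ≤ 4 * (2 * B ^ 3) + 2 * (20002 * B) + ((900 * B) ^ 3 / 3 +
          2 * B * (900 * B) ^ 2 + 2 * (2 * B) * (900 * B)) := by
        gcongr
        exacts [h.isControlled.norm_hamiltonian_le, h.norm_sub_le, h.norm_add_le,
          h.norm_point_le, h.norm_add_le, h.norm_add_le]
    _ ≤ 3 * 10 ^ 8 * B ^ 3 := by nlinarith [mul_nonneg (sub_nonneg.2 hB) (sq_nonneg B)]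

lemma inPoleBox (h : IsChartEntry α β P Q z B) {x u v : ℂ}
    (hx : x ∈ Metric.closedBall z (1 / (1000 * B))) (hu : ‖u‖ ≤ 1 / (1000 * B))
    (hv : ‖v‖ ≤ 4 * 10 ^ 8 * B ^ 3) : InPoleBox α β x u v B := by
  have hB := h.one_le
  have hρB : 1 / (1000 * B) ≤ B := by
    rw [div_le_iff₀ (by positivity)]
    nlinarith
  refine ⟨hB, h.norm_fst_param_le, h.norm_snd_param_le, ?_, hu, hv⟩
  linarith [norm_le_norm_add_norm_sub' x z, mem_closedBall_iff_norm.1 hx, h.norm_point_le]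

theorem isPoleChartOn (h : IsChartEntry α β P Q z B) {u v : ℂ → ℂ}
    (hc : IsPoleChart α β P Q u v) (hu : AnalyticAt ℂ u z ∧ u z = (P z - Q z)⁻¹)
    (hv : AnalyticAt ℂ v z ∧ v z = poleCoord α β z (P z) (Q z)) :
    IsPoleChartOn α β P Q u v (Metric.closedBall z (1 / (1000 * B))) B := by
  have hB := h.one_le
  have huM : ‖u z‖ + 3 / 5 * (1 / (1000 * B)) < 1 / (1000 * B) := by
    have hinv : 1 / (10 ^ 4 * B) = 1 / 10 * (1 / (1000 * B)) := by field_simp; norm_num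
    have hpos : 0 < 1 / (1000 * B) := by positivity
    rw [hu.2]
    linarith [h.norm_inv_sub_le]
  have hvM : ‖v z‖ + 8 * 10 ^ 10 * B ^ 4 * (1 / (1000 * B)) < 4 * 10 ^ 8 * B ^ 3 := by
    have hKρ : 8 * 10 ^ 10 * B ^ 4 * (1 / (1000 * B)) = 8 * 10 ^ 7 * B ^ 3 := by
      field_simp; norm_num
    rw [hv.2, hKρ]
    linarith [h.norm_poleCoord_le, pow_pos (zero_lt_one.trans_le hB) 3]
  have hcont := fun x => analyticAt_and_norm_le_of_norm_deriv_le (y := ![u, v]) (z₀ := z)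
    (ρ := 1 / (1000 * B)) (M := ![1 / (1000 * B), 4 * 10 ^ 8 * B ^ 3])
    (K := ![3 / 5, 8 * 10 ^ 10 * B ^ 4])
    (by simp [Fin.forall_fin_two, hc.meromorphicNFAt_fst, hc.meromorphicNFAt_snd])
    (by simp [Fin.forall_fin_two, hu.1, hv.1])
    (by
      simp only [Fin.forall_fin_two, Matrix.cons_val_zero, Matrix.cons_val_one]
      constructor <;> positivity)
    (by simpa only [Fin.forall_fin_two, Matrix.cons_val_zero, Matrix.cons_val_one]
      using ⟨huM, hvM⟩)
    (by
      simp only [Fin.forall_fin_two, Matrix.cons_val_zero, Matrix.cons_val_one]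
      rintro w hw ⟨huw, hvw⟩ ⟨hun, hvn⟩
      have hbox := h.inPoleBox hw hun hvn
      rw [(hc.hasDerivAt_fst w huw hvw).deriv, (hc.hasDerivAt_snd w huw hvw).deriv]
      exact ⟨hbox.norm_deriv_fst_le, hbox.norm_deriv_snd_le⟩) (x := x)
  simp only [Fin.forall_fin_two, Matrix.cons_val_zero, Matrix.cons_val_one] at hcont
  refine ⟨hc, fun x hx => (hcont x hx).1.1, fun x hx => (hcont x hx).2.1, fun x hx =>
    h.inPoleBox hx ((hcont x hx).1.2.trans (huM.le.trans' ?_))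
      ((hcont x hx).2.2.trans (hvM.le.trans' ?_))⟩
  all_goals gcongr; exact mem_closedBall_iff_norm.1 hx

theorem exists_isPoleChartOn (h : IsChartEntry α β P Q z B)
    (hPQ : IsNormalizedHamSolution α β P Q) :
    ∃ u v, IsPoleChartOn α β P Q u v (Metric.closedBall z (1 / (1000 * B))) B ∧
      u z = (P z - Q z)⁻¹ ∧ v z = poleCoord α β z (P z) (Q z) := by
  obtain ⟨u, v, hc, hu, hv⟩ := hPQ.exists_isPoleChart h.isControlled.analyticAt_fst
    h.isControlled.analyticAt_snd h.sub_ne_zero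
  exact ⟨u, v, h.isPoleChartOn hc hu hv, hu.2, hv.2⟩

lemma norm_poleHamiltonian_le (h : IsChartEntry α β P Q z B) :
    ‖poleHamiltonian α β z (P z - Q z)⁻¹ (poleCoord α β z (P z) (Q z))‖ ≤
      ‖hamiltonian α β z (P z) (Q z)‖ + 10001 * B := by
  have hP : (P z + Q z + (P z - Q z)) / 2 = P z := by ring
  have hQ : (P z + Q z - (P z - Q z)) / 2 = Q z := by ring
  have hpolar := hamiltonian_poleSum (α := α) (β := β) (z := z)
    (v := poleCoord α β z (P z) (Q z)) (inv_ne_zero h.sub_ne_zero)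
  rw [inv_inv, poleSum_poleCoord z h.sub_ne_zero, hP, hQ] at hpolar
  rw [eq_sub_of_add_eq hpolar.symm]
  refine (_root_.norm_sub_le _ _).trans ?_
  rw [norm_div, Complex.norm_two]
  linarith [h.norm_sub_le]

theorem isControlled_of_mem_sphere (h : IsChartEntry α β P Q z B)
    (hPQ : IsNormalizedHamSolution α β P Q) {x : ℂ}
    (hx : x ∈ Metric.sphere z (1 / (2000 * B))) :
    IsControlled α β P Q x (10 ^ 4 * B) (‖hamiltonian α β z (P z) (Q z)‖ + 20000 * B) := by
  have hB := h.one_le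
  obtain ⟨u, v, hc, hu, hv⟩ := h.exists_isPoleChartOn hPQ
  rw [mem_sphere_iff_norm] at hx
  have hzs : z ∈ Metric.closedBall z (1 / (1000 * B)) :=
    Metric.mem_closedBall_self (by positivity)
  have hxs : x ∈ Metric.closedBall z (1 / (1000 * B)) := by
    rw [mem_closedBall_iff_norm, hx]
    gcongr
    norm_num
  have hux : 1 / (10 ^ 4 * B) ≤ ‖u x‖ := by
    have hη : 2 / 5 * (1 / (2000 * B)) = 1 / (10 ^ 4 * B) + 1 / (10 ^ 4 * B) := by
      field_simp; norm_num
    have hfar := hc.le_norm_sub (convex_closedBall _ _) hxs hzs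
    have huz := h.norm_inv_sub_le
    rw [hx, hη] at hfar
    rw [← hu] at huz
    linarith [_root_.norm_sub_le (u x) (u z)]
  refine (hc.isControlled hxs hux).mono le_rfl ?_
  have hvar := hc.norm_poleHamiltonian_sub_le (convex_closedBall _ _) hxs hzs
  have hdrift : 83000 * B ^ 2 * (1 / (2000 * B)) = 83 / 2 * B := by field_simp; norm_num
  have hstart := h.norm_poleHamiltonian_le
  rw [hx, hdrift] at hvar
  rw [← hu, ← hv] at hstart
  linarith [norm_le_norm_add_norm_sub' (poleHamiltonian α β x (u x) (v x))
    (poleHamiltonian α β z (u z) (v z))]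

theorem hasSimplePoleBound (h : IsChartEntry α β P Q z B)
    (hPQ : IsNormalizedHamSolution α β P Q) {x : ℂ}
    (hx : x ∈ Metric.closedBall z (1 / (2000 * B))) :
    HasSimplePoleBound (fun w => (P w, Q w)) x (1 / (2000 * B)) 3 := by
  have hB := h.one_le
  obtain ⟨u, v, hc, -, -⟩ := h.exists_isPoleChartOn hPQ
  refine hc.hasSimplePoleBound (by positivity) le_rfl (Metric.closedBall_subset_closedBall' ?_)
  have hhalf : 1 / (2000 * B) + 1 / (2000 * B) = 1 / (1000 * B) := by field_simp; norm_num
  linarith [Metric.mem_closedBall.1 hx]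

end IsChartEntry

lemma exists_pow_eq_one_and_norm_add_mul_le {n : ℕ} (hn : Odd n) {a b : ℂ} {M : ℝ}
    (h : ‖a ^ n + b ^ n‖ ≤ M ^ n) : ∃ ζ : ℂ, ζ ^ n = 1 ∧ ‖a + ζ * b‖ ≤ M := by
  have hM : 0 ≤ M := hn.pow_nonneg_iff.1 ((norm_nonneg _).trans h)
  have hroot := Complex.isPrimitiveRoot_exp n hn.pos.ne'
  have hmem (ζ : ℂ) : ζ ∈ Polynomial.nthRootsFinset n (1 : ℂ) ↔ ζ ^ n = 1 :=
    Polynomial.mem_nthRootsFinset hn.pos 1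
  by_contra! hfar
  have hprod : M ^ n < ∏ ζ ∈ Polynomial.nthRootsFinset n (1 : ℂ), ‖a + ζ * b‖ := by
    rcases hM.eq_or_lt with rfl | hM
    · rw [zero_pow hn.pos.ne']
      exact Finset.prod_pos fun ζ hζ => hfar ζ ((hmem ζ).1 hζ)
    · rw [← hroot.card_nthRootsFinset, ← Finset.prod_const, hroot.card_nthRootsFinset]
      exact Finset.prod_lt_prod_of_nonempty (fun _ _ => hM)
        (fun ζ hζ => hfar ζ ((hmem ζ).1 hζ)) ⟨1, (hmem 1).2 (one_pow n)⟩
  rw [hroot.pow_add_pow_eq_prod_add_mul a b hn, norm_prod] at h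
  exact h.not_gt hprod

theorem exists_isChartEntry_rotate {α β z : ℂ} {P Q : ℂ → ℂ} {B : ℝ} (hB : 1 ≤ B)
    (hα : ‖α‖ ≤ B) (hβ : ‖β‖ ≤ B) (hz : ‖z‖ ≤ 2 * B)
    (hc : IsControlled α β P Q z (10001 * B) (2 * B ^ 3))
    (hlarge : 10 ^ 4 * B < ‖P z‖ ∨ 10 ^ 4 * B < ‖Q z‖) :
    ∃ ζ : ℂ, ζ ^ 3 = 1 ∧
      IsChartEntry (ζ * α) (ζ ^ 2 * β) (fun w => ζ * P w) (fun w => ζ ^ 2 * Q w) z B := by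
  have hcubes : P z ^ 3 + Q z ^ 3 =
      3 * (hamiltonian α β z (P z) (Q z) - (z * P z * Q z + α * Q z + β * P z)) := by
    unfold hamiltonian
    ring
  have hsum : ‖P z ^ 3 + Q z ^ 3‖ ≤ (900 * B) ^ 3 := by
    calc ‖P z ^ 3 + Q z ^ 3‖ ≤ 3 * (‖hamiltonian α β z (P z) (Q z)‖ +
          (‖z‖ * ‖P z‖ * ‖Q z‖ + ‖α‖ * ‖Q z‖ + ‖β‖ * ‖P z‖)) := by
          rw [hcubes, norm_mul, Complex.norm_ofNat]
          gcongr
          refine (norm_sub_le _ _).trans (add_le_add_right ?_ _)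
          exact norm_add₃_le.trans_eq (by simp only [norm_mul])
      _ ≤ 3 * (2 * B ^ 3 + (2 * B * (10001 * B) * (10001 * B) + B * (10001 * B) +
          B * (10001 * B))) := by
          gcongr
          exacts [hc.norm_hamiltonian_le, hc.norm_fst_le, hc.norm_snd_le, hc.norm_snd_le,
            hc.norm_fst_le]
      _ ≤ (900 * B) ^ 3 := by nlinarith [mul_nonneg (sub_nonneg.2 hB) (sq_nonneg B)]
  obtain ⟨ζ, hζ, hnear⟩ := exists_pow_eq_one_and_norm_add_mul_le (by decide) hsum
  have hnorm : ‖ζ‖ = 1 := Complex.norm_eq_one_of_pow_eq_one hζ three_ne_zero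
  refine ⟨ζ, hζ, hB, by simpa [hnorm], by simpa [hnorm], hz, (isControlled_rotate_iff hζ).2 hc,
    ?_, ?_⟩
  · have hfactor : ζ * P z + ζ ^ 2 * Q z = ζ * (P z + ζ * Q z) := by ring
    rwa [hfactor, norm_mul, hnorm, one_mul]
  · have hfactor : ζ * P z - ζ ^ 2 * Q z = ζ * (P z - ζ * Q z) := by ring
    have hP : ‖2 * P z‖ ≤ ‖P z + ζ * Q z‖ + ‖P z - ζ * Q z‖ :=
      (congrArg norm (by ring)).trans_le (norm_add_le _ _)
    have hQ : ‖2 * (ζ * Q z)‖ ≤ ‖P z + ζ * Q z‖ + ‖P z - ζ * Q z‖ :=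
      (congrArg norm (by ring)).trans_le (norm_sub_le _ _)
    rw [norm_mul, Complex.norm_two] at hP hQ
    rw [norm_mul, hnorm, one_mul] at hQ
    rw [hfactor, norm_mul, hnorm, one_mul]
    rcases hlarge with hlarge | hlarge <;> linarith

lemma norm_add_mul_sub_add_mul (z : ℂ) {e : ℂ} (he : ‖e‖ = 1) {s t : ℝ} (hst : s ≤ t) :
    ‖z + t * e - (z + s * e)‖ = t - s := by
  rw [add_sub_add_left_eq_sub, ← sub_mul, norm_mul, he, mul_one, ← Complex.ofReal_sub,
    Complex.norm_of_nonneg (sub_nonneg.2 hst)]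

section Step

variable {α β : ℂ} {P Q : ℂ → ℂ} {B : ℝ}

theorem IsNormalizedHamSolution.isControlled_and_hasSimplePoleBound_of_large
    (h : IsNormalizedHamSolution α β P Q) {z : ℂ} (hB : 1 ≤ B) (hα : ‖α‖ ≤ B) (hβ : ‖β‖ ≤ B)
    (hz : ‖z‖ ≤ 2 * B) (hc : IsControlled α β P Q z (10001 * B) (2 * B ^ 3))
    (hlarge : 10 ^ 4 * B < ‖P z‖ ∨ 10 ^ 4 * B < ‖Q z‖) :
    (∀ x ∈ Metric.sphere z (1 / (2000 * B)), IsControlled α β P Q x (10 ^ 4 * B)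
      (‖hamiltonian α β z (P z) (Q z)‖ + 20000 * B)) ∧
    ∀ x ∈ Metric.closedBall z (1 / (2000 * B)),
      HasSimplePoleBound (fun w => (P w, Q w)) x (1 / (2000 * B)) 3 := by
  obtain ⟨ζ, hζ, hentry⟩ := exists_isChartEntry_rotate hB hα hβ hz hc hlarge
  have hnorm : ‖ζ‖ = 1 := Complex.norm_eq_one_of_pow_eq_one hζ three_ne_zero
  refine ⟨fun x hx => ?_, fun x hx => ?_⟩
  · have hexit := hentry.isControlled_of_mem_sphere (h.rotate hζ) hx
    rwa [isControlled_rotate_iff hζ, hamiltonian_rotate hζ] at hexit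
  · exact (hentry.hasSimplePoleBound (h.rotate hζ) hx).mono subset_rfl
      fun w => by simp [Prod.norm_def, hnorm]

lemma IsNormalizedHamSolution.hasSimplePoleBound_of_mem_closedBall
    (h : IsNormalizedHamSolution α β P Q) {z₀ x : ℂ} {E : ℝ} (hB : 1 ≤ B) (hα : ‖α‖ ≤ B)
    (hβ : ‖β‖ ≤ B) (hz₀ : ‖z₀‖ ≤ B) (hc : IsControlled α β P Q z₀ (10 ^ 4 * B) E)
    (hx : x ∈ Metric.closedBall z₀ (1 / (4 * 10 ^ 8 * B))) :
    HasSimplePoleBound (fun w => (P w, Q w)) x (1 / (4 * 10 ^ 8 * B)) 3 := by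
  have hsub : Metric.closedBall x (1 / (4 * 10 ^ 8 * B)) ⊆
      Metric.closedBall z₀ (1 / (2 * 10 ^ 8 * B)) := by
    have hhalf : 1 / (4 * 10 ^ 8 * B) + 1 / (4 * 10 ^ 8 * B) = 1 / (2 * 10 ^ 8 * B) := by
      field_simp; norm_num
    exact Metric.closedBall_subset_closedBall' (by linarith [Metric.mem_closedBall.1 hx])
  refine ⟨x, fun w hw => ?_⟩
  have hw' := h.isControlled_of_mem_closedBall hB hα hβ hz₀ hc (hsub hw)
  calc ‖w - x‖ * ‖(P w, Q w)‖ ≤ 1 / (4 * 10 ^ 8 * B) * (10001 * B) :=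
        mul_le_mul (mem_closedBall_iff_norm.1 hw)
          (norm_prod_le_iff.2 ⟨hw'.norm_fst_le, hw'.norm_snd_le⟩) (norm_nonneg _) (by positivity)
    _ ≤ 3 := by field_simp; norm_num

theorem IsNormalizedHamSolution.exists_isControlled_add_mul
    (h : IsNormalizedHamSolution α β P Q) {z₀ e : ℂ} (hB : 1 ≤ B) (hα : ‖α‖ ≤ B)
    (hβ : ‖β‖ ≤ B) (hz₀ : ‖z₀‖ ≤ B) (he : ‖e‖ = 1)
    (hc : IsControlled α β P Q z₀ (10 ^ 4 * B) (B ^ 3)) :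
    ∃ τ : ℝ, 1 / (4 * 10 ^ 8 * B) ≤ τ ∧
      IsControlled α β P Q (z₀ + τ * e) (10 ^ 4 * B) (B ^ 3 + 30000 * B) ∧
      ∀ s ∈ Set.Icc 0 τ,
        HasSimplePoleBound (fun w => (P w, Q w)) (z₀ + s * e) (1 / (4 * 10 ^ 8 * B)) 3 := by
  set δ : ℝ := 1 / (4 * 10 ^ 8 * B) with hδ
  have hδ0 : 0 < δ := by positivity
  have hδη : δ ≤ 1 / (2000 * B) := by
    rw [hδ]
    gcongr
    norm_num
  have hδB : δ ≤ B := by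
    rw [hδ, div_le_iff₀ (by positivity)]
    nlinarith
  have hdist₀ {s : ℝ} (hs : 0 ≤ s) : ‖z₀ + s * e - z₀‖ = s := by
    simpa using norm_add_mul_sub_add_mul z₀ he hs
  have hpole : ∀ s ∈ Set.Icc 0 δ,
      HasSimplePoleBound (fun w => (P w, Q w)) (z₀ + s * e) δ 3 := fun s hs =>
    h.hasSimplePoleBound_of_mem_closedBall hB hα hβ hz₀ hc
      (mem_closedBall_iff_norm.2 ((hdist₀ hs.1).trans_le hs.2))
  have hc₁ := h.isControlled_of_mem_closedBall hB hα hβ hz₀ hc (x := z₀ + δ * e) <| by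
    rw [mem_closedBall_iff_norm, hdist₀ hδ0.le, hδ]
    gcongr
    norm_num
  by_cases hsmall : ‖P (z₀ + δ * e)‖ ≤ 10 ^ 4 * B ∧ ‖Q (z₀ + δ * e)‖ ≤ 10 ^ 4 * B
  · exact ⟨δ, le_rfl, ⟨hc₁.1, hc₁.2, hsmall.1, hsmall.2, by linarith [hc₁.5]⟩, hpole⟩
  have hz₁ : ‖z₀ + δ * e‖ ≤ 2 * B := by
    linarith [norm_le_norm_add_norm_sub' (z₀ + δ * e) z₀, hdist₀ hδ0.le]
  have hB3 : B ≤ B ^ 3 := le_self_pow₀ hB three_ne_zero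
  obtain ⟨hexit, hnear⟩ := h.isControlled_and_hasSimplePoleBound_of_large hB hα hβ hz₁
    (hc₁.mono le_rfl (by linarith)) (by simpa only [not_and_or, not_le] using hsmall)
  refine ⟨δ + 1 / (2000 * B), by simp only [le_add_iff_nonneg_right]; positivity,
    (hexit _ ?_).mono le_rfl (by linarith [hc₁.norm_hamiltonian_le]), fun s hs => ?_⟩
  · rw [mem_sphere_iff_norm, norm_add_mul_sub_add_mul z₀ he
      (by simp only [le_add_iff_nonneg_right]; positivity), add_sub_cancel_left]
  · rcases le_total s δ with hsδ | hδs
    · exact hpole s ⟨hs.1, hsδ⟩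
    · refine (hnear (z₀ + s * e) ?_).mono (Metric.closedBall_subset_closedBall hδη)
        fun _ => le_rfl
      rw [mem_closedBall_iff_norm, norm_add_mul_sub_add_mul z₀ he hδs]
      linarith [hs.2]

end Step

lemma of_forall_exists_add_le {G L : ℝ → Prop} {a δ r : ℝ} (har : a ≤ r) (hδ : 0 < δ) (ha : G a)
    (hstep : ∀ t ∈ Set.Icc a r, G t → ∃ t', t + δ ≤ t' ∧ G t' ∧ ∀ s ∈ Set.Icc t t', L s) :
    L r := by
  set S : Set ℝ := {t ∈ Set.Icc a r | G t}
  have hbdd : BddAbove S := ⟨r, fun t ht => ht.1.2⟩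
  obtain ⟨t, ⟨ht, htG⟩, htS⟩ :=
    exists_lt_of_lt_csSup (s := S) ⟨a, ⟨le_rfl, har⟩, ha⟩ (sub_lt_self _ hδ)
  obtain ⟨t', htt', ht'G, hL⟩ := hstep t ht htG
  refine hL r ⟨ht.2, le_of_not_gt fun ht'r => ?_⟩
  linarith [le_csSup hbdd (show t' ∈ S from ⟨⟨by linarith [ht.1], ht'r.le⟩, ht'G⟩)]

lemma pow_three_add_le_add_pow_three {b d : ℝ} (hb : 0 ≤ b) (hd : 10000 ≤ d * b) :
    b ^ 3 + 30000 * b ≤ (b + d) ^ 3 := by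
  have hd0 : 0 ≤ d := by
    by_contra! hneg
    linarith [mul_nonpos_of_nonpos_of_nonneg hneg.le hb]
  calc b ^ 3 + 30000 * b ≤ b ^ 3 + 3 * (d * b) * b := by gcongr; linarith
    _ ≤ b ^ 3 + 3 * (d * b) * b + (3 * b * d ^ 2 + d ^ 3) :=
      le_add_of_nonneg_right (by positivity)
    _ = (b + d) ^ 3 := by ring

/- The bound `B` on the solution may grow linearly along the ray: since each step has length at
least a multiple of `1 / B`, this gains a multiple of `B` in `B ^ 3`, enough to absorb the growth
of the Hamiltonian. -/
theorem IsNormalizedHamSolution.hasSimplePoleBound_add_mul {α β a e : ℂ} {P Q : ℂ → ℂ} {B r : ℝ}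
    (h : IsNormalizedHamSolution α β P Q) (hB : 1 ≤ B) (hα : ‖α‖ ≤ B) (hβ : ‖β‖ ≤ B)
    (ha : ‖a‖ ≤ B) (he : ‖e‖ = 1) (hc : IsControlled α β P Q a (10 ^ 4 * B) (B ^ 3))
    (hr : 0 ≤ r) :
    HasSimplePoleBound (fun w => (P w, Q w)) (a + r * e)
      (1 / (4 * 10 ^ 8 * (B + 10 ^ 13 * r))) 3 := by
  refine of_forall_exists_add_le (a := 0) (δ := 1 / (4 * 10 ^ 8 * (B + 10 ^ 13 * r)))
    (G := fun t => IsControlled α β P Q (a + t * e) (10 ^ 4 * (B + 10 ^ 13 * t))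
      ((B + 10 ^ 13 * t) ^ 3))
    (L := fun s => HasSimplePoleBound (fun w => (P w, Q w)) (a + s * e)
      (1 / (4 * 10 ^ 8 * (B + 10 ^ 13 * r))) 3) hr (by positivity) (by simpa using hc) ?_
  rintro t ⟨ht, htr⟩ hG
  have hBt : B ≤ B + 10 ^ 13 * t := by simp only [le_add_iff_nonneg_right]; positivity
  have hat : ‖a + t * e‖ ≤ B + 10 ^ 13 * t := by
    have htri := norm_add_le a (t * e)
    rw [norm_mul, he, mul_one, Complex.norm_of_nonneg ht] at htri
    linarith
  have hδ : 1 / (4 * 10 ^ 8 * (B + 10 ^ 13 * r)) ≤ 1 / (4 * 10 ^ 8 * (B + 10 ^ 13 * t)) := by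
    gcongr
  obtain ⟨τ, hτ, hτc, hpole⟩ := h.exists_isControlled_add_mul (hB.trans hBt) (hα.trans hBt)
    (hβ.trans hBt) hat he hG
  have hshift (s : ℝ) : a + t * e + s * e = a + ((t + s : ℝ) : ℂ) * e := by push_cast; ring
  rw [hshift] at hτc
  refine ⟨t + τ, by linarith, hτc.mono ?_ ?_, fun s hs => ?_⟩
  · have hτ0 : 0 ≤ τ := hτ.trans' (by positivity)
    gcongr
    linarith
  · rw [mul_add (10 ^ 13) t τ, ← add_assoc]
    refine pow_three_add_le_add_pow_three (hBt.trans' (by linarith)) ?_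
    rw [div_le_iff₀ (by positivity)] at hτ
    linarith
  · have hs' := hpole (s - t) ⟨sub_nonneg.2 hs.1, by linarith [hs.2]⟩
    rw [hshift, add_sub_cancel] at hs'
    exact hs'.mono (Metric.closedBall_subset_closedBall hδ) fun _ => le_rfl

theorem IsNormalizedHamSolution.exists_forall_hasSimplePoleBound {α β : ℂ} {P Q : ℂ → ℂ}
    (h : IsNormalizedHamSolution α β P Q) :
    ∃ C : ℝ, 1 ≤ C ∧
      ∀ z, HasSimplePoleBound (fun w => (P w, Q w)) z (1 / (C * (1 + ‖z‖))) 3 := by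
  obtain ⟨a, hPa, hQa⟩ := ((h.meromorphicNFAt_fst 0).meromorphicAt.eventually_analyticAt.and
    (h.meromorphicNFAt_snd 0).meromorphicAt.eventually_analyticAt).exists
  set B : ℝ := 1 + (‖α‖ + ‖β‖ + ‖a‖ + ‖P a‖ + ‖Q a‖ + ‖hamiltonian α β a (P a) (Q a)‖)
  have hsum : ‖α‖ ≤ B ∧ ‖β‖ ≤ B ∧ ‖a‖ ≤ B ∧ ‖P a‖ ≤ B ∧ ‖Q a‖ ≤ B ∧
      ‖hamiltonian α β a (P a) (Q a)‖ ≤ B ∧ 1 ≤ B := by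
    have := norm_nonneg α
    have := norm_nonneg β
    have := norm_nonneg a
    have := norm_nonneg (P a)
    have := norm_nonneg (Q a)
    have := norm_nonneg (hamiltonian α β a (P a) (Q a))
    refine ⟨?_, ?_, ?_, ?_, ?_, ?_, ?_⟩ <;> linarith
  obtain ⟨hα, hβ, ha, hP, hQ, hH, hB⟩ := hsum
  have hc : IsControlled α β P Q a (10 ^ 4 * B) (B ^ 3) :=
    ⟨hPa, hQa, by linarith, by linarith, hH.trans (le_self_pow₀ hB three_ne_zero)⟩
  refine ⟨4 * 10 ^ 8 * (B + 10 ^ 13 * (1 + ‖a‖)), by linarith [norm_nonneg a], fun z => ?_⟩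
  have hray := h.hasSimplePoleBound_add_mul hB hα hβ ha
    (Complex.norm_exp_ofReal_mul_I (z - a).arg) hc (norm_nonneg (z - a))
  rw [Complex.norm_mul_exp_arg_mul_I, add_sub_cancel] at hray
  refine hray.mono (Metric.closedBall_subset_closedBall ?_) fun _ => le_rfl
  have hza : ‖z - a‖ ≤ (1 + ‖a‖) * (1 + ‖z‖) := by
    linarith [norm_sub_le z a, mul_nonneg (norm_nonneg a) (norm_nonneg z)]
  refine one_div_le_one_div_of_le (by positivity) ?_
  calc 4 * 10 ^ 8 * (B + 10 ^ 13 * ‖z - a‖)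
      ≤ 4 * 10 ^ 8 * (B * (1 + ‖z‖) + 10 ^ 13 * ((1 + ‖a‖) * (1 + ‖z‖))) := by
        gcongr
        exact le_mul_of_one_le_right (by linarith) (by linarith [norm_nonneg z])
    _ = 4 * 10 ^ 8 * (B + 10 ^ 13 * (1 + ‖a‖)) * (1 + ‖z‖) := by ring

section Circle

lemma mul_abs_sub_le_norm_circleMap_sub (c : ℂ) (r : ℝ) {θ φ : ℝ} (h : |θ - φ| ≤ Real.pi) :
    2 / Real.pi * (|r| * |θ - φ|) ≤ ‖circleMap c r θ - circleMap c r φ‖ := by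
  have hfactor : circleMap c r θ - circleMap c r φ =
      circleMap 0 r φ * (Complex.exp (Complex.I * ((θ - φ : ℝ) : ℂ)) - 1) := by
    simp only [circleMap, zero_add, add_sub_add_left_eq_sub]
    rw [mul_sub, mul_one, mul_assoc, ← Complex.exp_add]
    congr 3
    push_cast
    ring
  have hhalf : |(θ - φ) / 2| = |θ - φ| / 2 := by rw [abs_div, abs_two]
  have hsin := Real.mul_abs_le_abs_sin (x := (θ - φ) / 2) (by rw [hhalf]; linarith)
  rw [hfactor, norm_mul, norm_circleMap_zero, Complex.norm_exp_I_mul_ofReal_sub_one, norm_mul,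
    Real.norm_ofNat, Real.norm_eq_abs]
  rw [hhalf] at hsin
  calc 2 / Real.pi * (|r| * |θ - φ|) = |r| * (2 * (2 / Real.pi * (|θ - φ| / 2))) := by ring
    _ ≤ |r| * (2 * |Real.sin ((θ - φ) / 2)|) := by gcongr

lemma negMulLog_add_negMulLog_le {u v : ℝ} (hu : 0 ≤ u) (hv : 0 ≤ v) :
    u.negMulLog + v.negMulLog ≤ (u + v).negMulLog + (u + v) := by
  rcases (add_nonneg hu hv).eq_or_lt with h | h
  · obtain ⟨rfl, rfl⟩ := (add_eq_zero_iff_of_nonneg hu hv).1 h.symm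
    simp
  have hscale (w : ℝ) (hw : 0 ≤ w) :
      w.negMulLog ≤ w / (u + v) * (u + v).negMulLog + (u + v - w) := by
    calc w.negMulLog = ((u + v) * (w / (u + v))).negMulLog := by rw [mul_div_cancel₀ _ h.ne']
      _ ≤ w / (u + v) * (u + v).negMulLog + (u + v) * (1 - w / (u + v)) := by
        rw [Real.negMulLog_mul]
        gcongr
        exact Real.negMulLog_le_one_sub_self (by positivity)
      _ = _ := by rw [mul_sub, mul_one, mul_div_cancel₀ _ h.ne']
  have hone : u / (u + v) + v / (u + v) = 1 := by rw [← add_div, div_self h.ne']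
  calc u.negMulLog + v.negMulLog
      ≤ (u / (u + v) + v / (u + v)) * (u + v).negMulLog + (u + v) := by
        linarith [hscale u hu, hscale v hv]
    _ = _ := by rw [hone, one_mul]

lemma intervalIntegrable_log_sub (a b φ : ℝ) :
    IntervalIntegrable (fun θ => Real.log (θ - φ)) MeasureTheory.volume a b := by
  simpa using (intervalIntegral.intervalIntegrable_log' (a := a - φ) (b := b - φ)).comp_sub_right φ

lemma neg_integral_log_sub_le {a b φ : ℝ} (hφ : φ ∈ Set.Icc a b) :
    -∫ θ in a..b, Real.log (θ - φ) ≤ (b - a).negMulLog + 2 * (b - a) := by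
  have hsymm : Real.log (a - φ) = Real.log (φ - a) := by rw [← Real.log_neg_eq_log, neg_sub]
  have hsum := negMulLog_add_negMulLog_le (sub_nonneg.2 hφ.2) (sub_nonneg.2 hφ.1)
  rw [sub_add_sub_cancel] at hsum
  rw [intervalIntegral.integral_comp_sub_right (fun x => Real.log x), integral_log, hsymm]
  simp only [Real.negMulLog] at hsum ⊢
  linarith

variable {E : Type*} [SeminormedAddCommGroup E] {f : ℂ → E} {c z : ℂ} {r ρ K a b : ℝ}

/- The centre of the pole bound need not lie on the circle; it is replaced by the nearest point
of the arc at the cost of a factor two. -/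
lemma HasSimplePoleBound.exists_posLog_circleMap_le (hf : HasSimplePoleBound f z ρ K)
    (hr : 0 < r) (hab : a ≤ b) (hπ : b - a ≤ Real.pi) (hK : r * (b - a) ≤ Real.pi * K)
    (harc : ∀ θ ∈ Set.Icc a b, circleMap c r θ ∈ Metric.closedBall z ρ) :
    ∃ φ ∈ Set.Icc a b, ∀ θ ∈ Set.Icc a b, θ ≠ φ →
      Real.posLog ‖f (circleMap c r θ)‖ ≤ Real.log (Real.pi * K / r) - Real.log (θ - φ) := by
  obtain ⟨y, hy⟩ := hf
  obtain ⟨φ, hφ, hmin⟩ := isCompact_Icc.exists_isMinOn (Set.nonempty_Icc.2 hab)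
    (f := fun θ => ‖circleMap c r θ - y‖) (by fun_prop)
  refine ⟨φ, hφ, fun θ hθ hne => ?_⟩
  have hpos : 0 < |θ - φ| := abs_pos.2 (sub_ne_zero.2 hne)
  have hle : |θ - φ| ≤ b - a := abs_sub_le_of_le_of_le hθ.1 hθ.2 hφ.1 hφ.2
  have hKr : |θ - φ| ≤ Real.pi * K / r := by
    rw [le_div_iff₀ hr]
    nlinarith
  have hdist : r * |θ - φ| / Real.pi ≤ ‖circleMap c r θ - y‖ := by
    have hchord := mul_abs_sub_le_norm_circleMap_sub c r (hle.trans hπ)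
    have htri := norm_sub_le (circleMap c r θ - y) (circleMap c r φ - y)
    rw [sub_sub_sub_cancel_right] at htri
    rw [abs_of_pos hr, div_mul_eq_mul_div, mul_div_assoc] at hchord
    linarith [show ‖circleMap c r φ - y‖ ≤ ‖circleMap c r θ - y‖ from hmin hθ]
  have hnorm : ‖f (circleMap c r θ)‖ ≤ Real.pi * K / r / |θ - φ| := by
    have hfK := (mul_le_mul_of_nonneg_right hdist (norm_nonneg _)).trans (hy _ (harc θ hθ))
    rw [le_div_iff₀ hpos, le_div_iff₀ hr]
    rw [div_mul_eq_mul_div, div_le_iff₀ Real.pi_pos] at hfK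
    linarith
  calc Real.posLog ‖f (circleMap c r θ)‖ ≤ Real.posLog (Real.pi * K / r / |θ - φ|) :=
        Real.posLog_le_posLog (norm_nonneg _) hnorm
    _ = Real.log (Real.pi * K / r / |θ - φ|) := by
        refine Real.posLog_eq_log ?_
        rw [abs_of_nonneg ((norm_nonneg _).trans hnorm)]
        exact (one_le_div hpos).2 hKr
    _ = Real.log (Real.pi * K / r) - Real.log (θ - φ) := by
        rw [Real.log_div (hpos.trans_le hKr).ne' hpos.ne', Real.log_abs]

lemma HasSimplePoleBound.integral_posLog_circleMap_le (hf : HasSimplePoleBound f z ρ K)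
    (hr : 0 < r) (hab : a < b) (hπ : b - a ≤ Real.pi) (hK : r * (b - a) ≤ Real.pi * K)
    (harc : ∀ θ ∈ Set.Icc a b, circleMap c r θ ∈ Metric.closedBall z ρ)
    (hint : IntervalIntegrable (fun θ => Real.posLog ‖f (circleMap c r θ)‖)
      MeasureTheory.volume a b) :
    ∫ θ in a..b, Real.posLog ‖f (circleMap c r θ)‖ ≤
      (b - a) * (Real.log (Real.pi * K / (r * (b - a))) + 2) := by
  obtain ⟨φ, hφ, hle⟩ := hf.exists_posLog_circleMap_le hr hab.le hπ hK harc
  have hab' : 0 < b - a := sub_pos.2 hab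
  have hK0 : 0 < Real.pi * K := (mul_pos hr hab').trans_le hK
  calc ∫ θ in a..b, Real.posLog ‖f (circleMap c r θ)‖
      ≤ ∫ θ in a..b, (Real.log (Real.pi * K / r) - Real.log (θ - φ)) := by
        refine intervalIntegral.integral_mono_ae_restrict hab.le hint
          (intervalIntegrable_const.sub (intervalIntegrable_log_sub a b φ)) ?_
        filter_upwards [MeasureTheory.ae_restrict_mem measurableSet_Icc,
          MeasureTheory.ae_restrict_of_ae (MeasureTheory.volume.ae_ne φ)] with θ hθ hne
        exact hle θ hθ hne
    _ ≤ (b - a) * Real.log (Real.pi * K / r) + ((b - a).negMulLog + 2 * (b - a)) := by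
        rw [intervalIntegral.integral_sub intervalIntegrable_const
          (intervalIntegrable_log_sub a b φ), intervalIntegral.integral_const, smul_eq_mul,
          sub_eq_add_neg]
        gcongr
        exact neg_integral_log_sub_le hφ
    _ = (b - a) * (Real.log (Real.pi * K / (r * (b - a))) + 2) := by
        rw [← div_div, Real.log_div (div_pos hK0 hr).ne' hab'.ne', Real.negMulLog]
        ring

lemma integral_le_of_forall_integral_nat_mul_le {g : ℝ → ℝ} {n : ℕ} {l M : ℝ} (hl : 0 ≤ l)
    (hint : IntervalIntegrable g MeasureTheory.volume 0 (n * l))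
    (hle : ∀ k < n, IntervalIntegrable g MeasureTheory.volume (k * l) ((k + 1 : ℕ) * l) →
      ∫ θ in (k * l)..((k + 1 : ℕ) * l), g θ ≤ M) :
    ∫ θ in (0 : ℝ)..(n * l), g θ ≤ n * M := by
  have hmem (k : ℕ) (hk : k ≤ n) : k * l ∈ Set.uIcc 0 (n * l) := by
    rw [Set.uIcc_of_le (by positivity)]
    exact ⟨by positivity, by gcongr⟩
  have hint' (k : ℕ) (hk : k < n) :
      IntervalIntegrable g MeasureTheory.volume (k * l) ((k + 1 : ℕ) * l) :=
    hint.mono_set (Set.uIcc_subset_uIcc (hmem k hk.le) (hmem (k + 1) hk))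
  calc ∫ θ in (0 : ℝ)..(n * l), g θ
      = ∑ k ∈ Finset.range n, ∫ θ in (k * l)..((k + 1 : ℕ) * l), g θ := by
        simpa using (intervalIntegral.sum_integral_adjacent_intervals
          (a := fun k : ℕ => (k : ℝ) * l) hint').symm
    _ ≤ n * M := by
        simpa using Finset.sum_le_card_nsmul (Finset.range n) _ M fun k hk =>
          hle k (Finset.mem_range.1 hk) (hint' k (Finset.mem_range.1 hk))

lemma circleAverage_posLog_norm_le_of_two_pi_mul_le {n : ℕ} (hr : 0 < r) (hρr : ρ ≤ r)
    (hρK : ρ ≤ K) (hn : 2 * Real.pi * r ≤ n * ρ) (hn0 : n ≠ 0)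
    (hint : CircleIntegrable (fun z => Real.posLog ‖f z‖) c r)
    (hf : ∀ z ∈ Metric.sphere c r, HasSimplePoleBound f z ρ K) :
    Real.circleAverage (fun z => Real.posLog ‖f z‖) c r ≤ Real.log (K * n / (2 * r)) + 2 := by
  obtain ⟨l, hl⟩ : ∃ l, l = 2 * Real.pi / n := ⟨_, rfl⟩
  have hnl : n * l = 2 * Real.pi := by rw [hl, mul_div_cancel₀ _ (Nat.cast_ne_zero.2 hn0)]
  have hl0 : 0 < l := hl ▸ by positivity
  have hrl : r * l ≤ ρ := by
    refine le_of_mul_le_mul_left (a := (n : ℝ)) ?_ (by positivity)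
    calc n * (r * l) = 2 * Real.pi * r := by rw [mul_left_comm, hnl, mul_comm]
      _ ≤ n * ρ := hn
  have hrlK : r * l ≤ Real.pi * K :=
    (hrl.trans hρK).trans <| le_mul_of_one_le_left
      ((mul_pos hr hl0).le.trans (hrl.trans hρK)) (by linarith [Real.pi_gt_three])
  have hl1 : l ≤ 1 := le_of_mul_le_mul_left (by linarith) hr
  have hlen (k : ℕ) : ((k + 1 : ℕ) : ℝ) * l - k * l = l := by push_cast; ring
  have harc (k : ℕ) (θ : ℝ) (hθ : θ ∈ Set.Icc (k * l) ((k + 1 : ℕ) * l)) :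
      circleMap c r θ ∈ Metric.closedBall (circleMap c r (k * l)) ρ := by
    have hlip := (lipschitzWith_circleMap c r).dist_le_mul θ (k * l)
    rw [Real.coe_nnabs, abs_of_pos hr, Real.dist_eq, abs_of_nonneg (sub_nonneg.2 hθ.1)] at hlip
    refine hlip.trans (hrl.trans' ?_)
    gcongr
    linarith [hθ.2, hlen k]
  rw [Real.circleAverage_def, smul_eq_mul, inv_mul_le_iff₀ (by positivity), ← hnl, mul_assoc]
  refine integral_le_of_forall_integral_nat_mul_le hl0.le (hnl ▸ hint) fun k _ hk => ?_
  have hbound := (hf _ (circleMap_mem_sphere c hr.le (k * l))).integral_posLog_circleMap_le hr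
    (by linarith [hlen k]) (by linarith [hlen k, Real.pi_gt_three])
    (by rw [hlen]; exact hrlK) (harc k) hk
  have hval : Real.pi * K / (r * l) = K * n / (2 * r) := by
    rw [hl]
    field_simp
  rwa [hlen, hval] at hbound

theorem circleAverage_posLog_norm_le_of_hasSimplePoleBound (hρ : 0 < ρ) (hρr : ρ ≤ r)
    (hρK : ρ ≤ K) (hint : CircleIntegrable (fun z => Real.posLog ‖f z‖) c r)
    (hf : ∀ z ∈ Metric.sphere c r, HasSimplePoleBound f z ρ K) :
    Real.circleAverage (fun z => Real.posLog ‖f z‖) c r ≤ Real.log (4 * K / ρ) + 2 := by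
  have hr : 0 < r := hρ.trans_le hρr
  have hK : 0 < K := hρ.trans_le hρK
  obtain ⟨n, hn⟩ : ∃ n, n = ⌈2 * Real.pi * r / ρ⌉₊ := ⟨_, rfl⟩
  have hn0 : 0 < n := hn ▸ Nat.ceil_pos.2 (by positivity)
  have hn_ge : 2 * Real.pi * r ≤ n * ρ := (div_le_iff₀ hρ).1 (hn ▸ Nat.le_ceil _)
  have hn_le : n ≤ 2 * Real.pi * r / ρ + 1 := hn ▸ (Nat.ceil_lt_add_one (by positivity)).le
  refine (circleAverage_posLog_norm_le_of_two_pi_mul_le hr hρr hρK hn_ge hn0.ne' hint hf).trans ?_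
  gcongr ?_ + 2
  refine Real.log_le_log (by positivity) ?_
  calc K * n / (2 * r) ≤ K * (2 * Real.pi * r / ρ + r / ρ) / (2 * r) := by
        gcongr
        exact hn_le.trans (add_le_add_right ((one_le_div hρ).2 hρr) _)
    _ = (Real.pi + 1 / 2) * K / ρ := by
        field_simp
    _ ≤ 4 * K / ρ := by
        gcongr
        linarith [Real.pi_lt_d2]

end Circle

lemma proximity_eq_circleAverage (f : ℂ → ℂ) (r : ℝ) :
    proximity f r = Real.circleAverage (fun z => Real.posLog ‖f z‖) 0 r := by
  simp [proximity, Real.circleAverage_def, circleMap, logPlus, Real.posLog]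

lemma proximity_toMeromorphicNFOn {f : ℂ → ℂ} (hf : MeromorphicOn f Set.univ) {r : ℝ}
    (hr : r ≠ 0) : proximity (toMeromorphicNFOn f Set.univ) r = proximity f r := by
  simp only [proximity_eq_circleAverage]
  refine Real.circleAverage_congr_codiscreteWithin ?_ hr
  filter_upwards [(toMeromorphicNFOn_eqOn_codiscrete hf).filter_mono
    (codiscreteWithin_mono (Set.subset_univ _))] with z hz
  rw [hz]

theorem proximity_isBigO_log {f : ℂ → ℂ} {C K : ℝ} (hf : MeromorphicOn f Set.univ)
    (hC : 1 ≤ C) (hK : 1 ≤ K)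
    (hpole : ∀ z, HasSimplePoleBound f z (1 / (C * (1 + ‖z‖))) K) :
    proximity f =O[atTop] Real.log := by
  have hlog : ∀ᶠ r : ℝ in atTop, Real.log (8 * K * C) + 2 ≤ Real.log r :=
    Real.tendsto_log_atTop.eventually_ge_atTop _
  refine IsBigO.of_bound 2 ?_
  filter_upwards [hlog, eventually_ge_atTop 1] with r hlog hr
  have hr0 : 0 < r := one_pos.trans_le hr
  have hCr : 1 ≤ C * (1 + r) := one_le_mul_of_one_le_of_one_le hC (by linarith)
  have hρ : 1 / (C * (1 + r)) ≤ 1 := (div_le_one (by positivity)).2 hCr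
  have hprox : proximity f r ≤ Real.log (4 * K / (1 / (C * (1 + r)))) + 2 := by
    rw [proximity_eq_circleAverage]
    refine circleAverage_posLog_norm_le_of_hasSimplePoleBound (by positivity) (hρ.trans hr)
      (hρ.trans hK) (MeromorphicOn.circleIntegrable_posLog_norm fun z _ => hf z trivial)
      fun z hz => ?_
    simpa only [mem_sphere_zero_iff_norm.1 hz] using hpole z
  have hnonneg : 0 ≤ proximity f r := by
    rw [proximity_eq_circleAverage]
    exact Real.circleAverage_nonneg_of_nonneg fun _ _ => Real.posLog_nonneg
  rw [Real.norm_of_nonneg hnonneg, Real.norm_of_nonneg (Real.log_nonneg hr)]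
  calc proximity f r ≤ Real.log (4 * K / (1 / (C * (1 + r)))) + 2 := hprox
    _ ≤ Real.log (8 * K * C * r) + 2 := by
      gcongr
      rw [div_div_eq_mul_div, div_one]
      nlinarith [mul_pos (one_pos.trans_le hK) (one_pos.trans_le hC)]
    _ = Real.log (8 * K * C) + 2 + Real.log r := by
      rw [Real.log_mul (by positivity) hr0.ne']
      ring
    _ ≤ 2 * Real.log r := by linarith

theorem stmt_8_general (α β : ℂ) (p q : ℂ → ℂ) (h : IsHamSolution α β p q) :
    (fun r => proximity p r + proximity q r) =O[atTop] Real.log ∧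
    (fun r => nevT p r - countingN p r) =O[atTop] Real.log ∧
    (fun r => nevT q r - countingN q r) =O[atTop] Real.log := by
  have hnorm := h.isNormalizedHamSolution
  obtain ⟨C, hC, hpole⟩ := hnorm.exists_forall_hasSimplePoleBound
  have hcongr {f : ℂ → ℂ} (hf : MeromorphicOn f Set.univ) :
      proximity (toMeromorphicNFOn f Set.univ) =ᶠ[atTop] proximity f := by
    filter_upwards [eventually_ne_atTop 0] with r hr using proximity_toMeromorphicNFOn hf hr
  have hp : proximity p =O[atTop] Real.log := (hcongr h.1).symm.trans_isBigO <|
    proximity_isBigO_log (fun z _ => (hnorm.meromorphicNFAt_fst z).meromorphicAt) hC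
      (by norm_num) fun z => (hpole z).mono subset_rfl fun _ => le_max_left _ _
  have hq : proximity q =O[atTop] Real.log := (hcongr h.2.1).symm.trans_isBigO <|
    proximity_isBigO_log (fun z _ => (hnorm.meromorphicNFAt_snd z).meromorphicAt) hC
      (by norm_num) fun z => (hpole z).mono subset_rfl fun _ => le_max_right _ _
  refine ⟨hp.add hq, ?_, ?_⟩
  · simpa only [nevT, add_sub_cancel_right] using hp
  · simpa only [nevT, add_sub_cancel_right] using hq

/-- For a transcendental solution `(p, q)` of the Hamiltonian system,
`m(r, p) + m(r, q) = O(log r)`, hence `T(r, p) = N(r, p) + O(log r)` and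
`T(r, q) = N(r, q) + O(log r)`. -/
theorem stmt_8 (α β : ℂ) (p q : ℂ → ℂ) (h : IsHamSolution α β p q)
    (htr : ¬ IsRationalFn p) :
    (fun r => proximity p r + proximity q r) =O[atTop] Real.log ∧
    (fun r => nevT p r - countingN p r) =O[atTop] Real.log ∧
    (fun r => nevT q r - countingN q r) =O[atTop] Real.log :=
  stmt_8_general α β p q h
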